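/- Let n and k be positive integers and let λ = (λ₁, λ₂, …, λ_m) be a partition of n with n ≥ k + λ₂. Then the number of Kronecker tableaux of length k, initial shape (n) and final shape λ equals the number of pairs (T, π) where T is a partial standard tableau of shape λ̄ with labels in {1, …, k} and π is a permutation of {1, …, k} such that: every non-trivial cycle of π is decreasing, every fixed point of π is a label of a cell of T, and every label of T is the greatest element of its cycle in π. -/

import Mathlib

open Finset

namespace KroneckerPaper

/-- A (removable) corner of a Young diagram: a cell with no cell below it nor to its right
(in English notation; equivalently, in French notation, a cell at the right end of its row
with no cell above it). -/
def IsCorner (μ : YoungDiagram) (c : ℕ × ℕ) : Prop :=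
  c ∈ μ ∧ (c.1 + 1, c.2) ∉ μ ∧ (c.1, c.2 + 1) ∉ μ

/-- The *first corner* of a Young diagram: the unique corner lying on a row of maximal
length. -/
def IsFirstCorner (μ : YoungDiagram) (c : ℕ × ℕ) : Prop :=
  IsCorner μ c ∧ μ.rowLen c.1 = μ.rowLen 0

/-- `μ'` is obtained from `μ` by adding one new cell which is a corner of `μ'`. -/
def AddCorner (μ μ' : YoungDiagram) : Prop :=
  ∃ c, IsCorner μ' c ∧ c ∉ μ.cells ∧ μ'.cells = insert c μ.cells

/-- `μ'` is obtained from `μ` by removing one corner of `μ`. -/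
def RemoveCorner (μ μ' : YoungDiagram) : Prop :=
  ∃ c, IsCorner μ c ∧ μ'.cells = μ.cells.erase c

/-- `μ' ≠ μ` *differs from `μ` by the position of a corner*: it is obtained from `μ` by
removing a corner of `μ` and adding a new cell which is a corner of `μ'`. -/
def MoveCorner (μ μ' : YoungDiagram) : Prop :=
  μ' ≠ μ ∧ ∃ c c', IsCorner μ c ∧ IsCorner μ' c' ∧ c' ∉ μ.cells.erase c ∧
    μ'.cells = insert c' (μ.cells.erase c)

/-- The one-row Young diagram `(n)`. -/
def rowDiagram (n : ℕ) : YoungDiagram :=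
  YoungDiagram.ofRowLens [n] (List.pairwise_singleton _ n).sortedGE

/-- The Young diagram obtained by deleting the first (longest) row, i.e. the truncated
partition `λ̄ = (λ₂, …, λ_m)` of `λ = (λ₁, λ₂, …, λ_m)`. -/
def truncate (μ : YoungDiagram) : YoungDiagram where
  cells := (μ.cells.filter fun c => 1 ≤ c.1).image fun c => (c.1 - 1, c.2)
  isLowerSet := by
    rintro ⟨i1, j1⟩ ⟨i2, j2⟩ ⟨hi, hj⟩ h
    simp only [Finset.coe_image, Finset.coe_filter, Set.mem_image, Set.mem_setOf_eq,
      Finset.mem_coe, YoungDiagram.mem_cells] at h ⊢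
    obtain ⟨⟨a, b⟩, ⟨ha, ha1⟩, heq⟩ := h
    simp only [Prod.mk.injEq] at heq
    exact ⟨(i2 + 1, j2), ⟨μ.up_left_mem (by omega) (by omega) ha, by omega⟩, by simp⟩

/-- A *Kronecker tableau* of length `k`, initial shape `μ` and final shape `lam`:
a sequence `μ⁰ = μ, μ¹, …, μ^k = lam` of diagrams such that each `μ^{i+1}` either differs
from `μ^i` by the position of a corner, or equals `μ^i` together with the datum of a
distinguished corner of `μ^{i+1}` other than its first corner. -/
structure KroneckerTableau (k : ℕ) (μ lam : YoungDiagram) where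
  seq : Fin (k + 1) → YoungDiagram
  dist : Fin k → Option (ℕ × ℕ)
  init : seq 0 = μ
  final : seq (Fin.last k) = lam
  step : ∀ i : Fin k,
    (MoveCorner (seq i.castSucc) (seq i.succ) ∧ dist i = none) ∨
    (seq i.succ = seq i.castSucc ∧
      ∃ c, dist i = some c ∧ IsCorner (seq i.succ) c ∧ ¬ IsFirstCorner (seq i.succ) c)

/-- A *partial standard tableau* of shape `α` with labels in `{1, …, k}`: a labelling of the
cells of `α` by pairwise distinct integers of `{1, …, k}` increasing along rows and columns
(cells outside `α` are labelled `0` by convention). -/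
structure PartialST (α : YoungDiagram) (k : ℕ) where
  label : ℕ × ℕ → ℕ
  mem_of_cell : ∀ c ∈ α, label c ∈ Finset.Icc 1 k
  zero_of_not_cell : ∀ c, c ∉ α → label c = 0
  injOn : ∀ c ∈ α, ∀ c' ∈ α, label c = label c' → c = c'
  row_incr : ∀ i j1 j2 : ℕ, j1 < j2 → (i, j2) ∈ α → label (i, j1) < label (i, j2)
  col_incr : ∀ i1 i2 j : ℕ, i1 < i2 → (i2, j) ∈ α → label (i1, j) < label (i2, j)

/-- `f^α`, the number of standard Young tableaux of shape `α`. -/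
noncomputable def fSYT (α : YoungDiagram) : ℕ :=
  Nat.card (PartialST α α.card)

/-- `p₂ n k`: the number of partitions of an `n`-element set into exactly `k` blocks, each of
size at least `2` (associated Stirling numbers of the second kind). -/
noncomputable def p2 (n k : ℕ) : ℕ :=
  Nat.card {P : Finpartition (Finset.univ : Finset (Fin n)) //
    P.parts.card = k ∧ ∀ b ∈ P.parts, 2 ≤ b.card}

/-- Every non-trivial cycle of `π` is *decreasing*: `π x < x` for every element `x` of a
non-trivial cycle which is not the minimum of its cycle. -/
def DecCycles {S : Type*} [LinearOrder S] (π : Equiv.Perm S) : Prop :=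
  ∀ x, π x ≠ x → (∃ y, π.SameCycle x y ∧ y < x) → π x < x

/-- A pair `(T, π)` of a partial standard tableau of shape `α` with labels in `{1, …, k}`
and a permutation `π` of `{1, …, k}` all of whose non-trivial cycles are decreasing, such
that every fixed point of `π` is a label of `T` and every label of `T` is the greatest
element of its cycle in `π`. -/
structure TabPerm (k : ℕ) (α : YoungDiagram) where
  T : PartialST α k
  π : Equiv.Perm ℕ
  perm_of : ∀ x : ℕ, x ∉ Finset.Icc 1 k → π x = x
  dec : DecCycles π
  fix_mem : ∀ x ∈ Finset.Icc 1 k, π x = x → ∃ c ∈ α, T.label c = x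
  label_max : ∀ c ∈ α, ∀ y : ℕ, π.SameCycle (T.label c) y → y ≤ T.label c


/-! ### Permutations with decreasing cycles -/

lemma sameCycle_induct {f : Equiv.Perm ℕ} (S : ℕ → ℕ → Prop) (hS : Equivalence S)
    (h : ∀ y, S (f y) y) {a b : ℕ} (hab : f.SameCycle a b) : S a b := by
  obtain ⟨i, rfl⟩ := hab
  have hn : ∀ (n : ℕ) (a : ℕ), S a ((f ^ n) a) := by
    intro n
    induction n with
    | zero => intro a; simpa using hS.refl a
    | succ n ih =>
      intro a
      rw [pow_succ', Equiv.Perm.mul_apply]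
      exact hS.trans (ih a) (hS.symm (h _))
  cases i with
  | ofNat n => simpa using hn n a
  | negSucc n =>
    have := hn (n + 1) ((f ^ (Int.negSucc n)) a)
    have h2 : (f ^ (n + 1)) ((f ^ (Int.negSucc n)) a) = a := by
      rw [zpow_negSucc]; simp [-zpow_natCast]
    rw [h2] at this
    exact hS.symm this

/-- contraction of `N` to `x`. -/
def contr (N x y : ℕ) : ℕ := if y = N then x else y

lemma sameCycle_swap_mul {π : Equiv.Perm ℕ} {N x : ℕ} (hN : π N = N) (hx : x ≠ N) (y z : ℕ) :
    (Equiv.swap x N * π).SameCycle y z ↔ π.SameCycle (contr N x y) (contr N x z) := by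
  constructor
  · intro h
    refine sameCycle_induct (fun y z => π.SameCycle (contr N x y) (contr N x z))
      ⟨fun _ => Equiv.Perm.SameCycle.refl _ _, fun h => h.symm, fun h h' => h.trans h'⟩ ?_ h
    intro y
    change π.SameCycle (contr N x (Equiv.swap x N (π y))) (contr N x y)
    by_cases hy : y = N
    · subst hy
      simp [contr, hN, hx, Equiv.Perm.SameCycle.refl]
    · have h1 : π y ≠ N := fun h => hy (π.injective (h.trans hN.symm))
      by_cases h2 : π y = x
      · rw [h2]; simp [contr, hy]
        rw [← h2]; simp [Equiv.Perm.SameCycle.refl]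
      · rw [Equiv.swap_apply_of_ne_of_ne h2 h1]
        simp [contr, h1, hy, Equiv.Perm.SameCycle.refl]
  · intro h
    have hr : ∀ y, (Equiv.swap x N * π).SameCycle y (contr N x y) := by
      intro y
      unfold contr
      split_ifs with hy
      · subst hy
        refine ⟨1, ?_⟩
        simp [hN]
      · exact Equiv.Perm.SameCycle.refl _ _
    refine (hr y).trans (Equiv.Perm.SameCycle.trans ?_ (hr z).symm)
    refine sameCycle_induct (fun y z => (Equiv.swap x N * π).SameCycle y z)
      ⟨fun _ => Equiv.Perm.SameCycle.refl _ _, fun h => h.symm, fun h h' => h.trans h'⟩ ?_ h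
    intro y
    by_cases hy : y = N
    · subst hy; rw [hN]; 
    · have h1 : π y ≠ N := fun h => hy (π.injective (h.trans hN.symm))
      have h3 : (Equiv.swap x N * π).SameCycle ((Equiv.swap x N * π) y) y := by
        simp [-Equiv.Perm.coe_mul, Equiv.Perm.SameCycle.refl]
      by_cases h2 : π y = x
      · have h4 : (Equiv.swap x N * π) y = N := by simp [h2]
        rw [h4] at h3
        have := hr N
        simp only [contr, if_true] at this
        rw [h2]
        exact this.symm.trans h3
      · have h4 : (Equiv.swap x N * π) y = π y := by
          simp [Equiv.swap_apply_of_ne_of_ne h2 h1]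
        rwa [h4] at h3

/-- Admissible pairs (permutation, set of labels). -/
structure InQ (k : ℕ) (π : Equiv.Perm ℕ) (L : Finset ℕ) : Prop where
  out : ∀ x : ℕ, x ∉ Finset.Icc 1 k → π x = x
  dec : DecCycles π
  sub : L ⊆ Finset.Icc 1 k
  fix : ∀ x ∈ Finset.Icc 1 k, π x = x → x ∈ L
  max : ∀ x ∈ L, ∀ y, π.SameCycle x y → y ≤ x

lemma InQ.fwd {k : ℕ} {π : Equiv.Perm ℕ} {L : Finset ℕ} (h : InQ k π L) {x : ℕ} (hx : x ∈ L)
    {L' : Finset ℕ} (h1 : L.erase x ⊆ L') (h2 : L' ⊆ insert (k + 1) (L.erase x)) :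
    InQ (k + 1) (Equiv.swap x (k + 1) * π) L' := by
  have hxk := Finset.mem_Icc.1 (h.sub hx)
  have hN : π (k + 1) = k + 1 := h.out _ (by simp)
  have hxN : x ≠ k + 1 := by omega
  have hS := fun y z => sameCycle_swap_mul hN hxN y z
  have hbd : ∀ y, k + 1 < y → (Equiv.swap x (k + 1) * π) y = y := by
    intro y hy
    have : π y = y := h.out _ (by simp; omega)
    simp only [Equiv.Perm.mul_apply, this]
    exact Equiv.swap_apply_of_ne_of_ne (by omega) (by omega)
  refine ⟨?_, ?_, ?_, ?_, ?_⟩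
  · intro y hy
    simp only [Finset.mem_Icc, not_and, not_le] at hy
    by_cases hy1 : k + 1 < y
    · exact hbd y hy1
    · have : π y = y := h.out _ (by simp; omega)
      simp only [Equiv.Perm.mul_apply, this]
      exact Equiv.swap_apply_of_ne_of_ne (by omega) (by omega)
  · rintro y hy ⟨z, hz, hzy⟩
    rw [hS] at hz
    by_cases hyN : y = k + 1
    · subst hyN; simp [hN]; omega
    have hyk : y < k + 1 := by
      by_contra hc
      exact hy (hbd y (by omega))
    have hzN : z ≠ k + 1 := by omega
    simp only [contr, hyN, hzN, if_false] at hz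
    have h1 : π y ≠ k + 1 := fun h => hyN (π.injective (h.trans hN.symm))
    by_cases h2 : π y = x
    · exfalso
      have hyx : y ≤ x := h.max x hx y (by rw [← h2]; simp [Equiv.Perm.SameCycle.refl])
      by_cases h3 : π y = y
      · have : y = z := by
          obtain ⟨i, hi⟩ := hz
          rw [← hi, Equiv.Perm.zpow_apply_eq_self_of_apply_eq_self h3]
        omega
      · have := h.dec y h3 ⟨z, hz, hzy⟩
        omega
    · have h4 : (Equiv.swap x (k + 1) * π) y = π y := by
        simp [Equiv.swap_apply_of_ne_of_ne h2 h1]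
      rw [h4] at hy ⊢
      exact h.dec y hy ⟨z, hz, hzy⟩
  · intro y hy
    have := h2 hy
    simp only [Finset.mem_insert, Finset.mem_erase] at this
    rcases this with rfl | ⟨_, h3⟩
    · simp
    · have := Finset.mem_Icc.1 (h.sub h3)
      simp; omega
  · intro y hy hfix
    have hyN : y ≠ k + 1 := by
      rintro rfl
      simp [hN] at hfix; omega
    have h1' : π y ≠ k + 1 := fun h => hyN (π.injective (h.trans hN.symm))
    by_cases h2' : π y = x
    · simp [h2'] at hfix; omega
    · have h4 : (Equiv.swap x (k + 1) * π) y = π y := by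
        simp [Equiv.swap_apply_of_ne_of_ne h2' h1']
      rw [h4] at hfix
      apply h1
      rw [Finset.mem_erase]
      refine ⟨by rintro rfl; exact h2' hfix, h.fix _ ?_ hfix⟩
      simp at hy ⊢; omega
  · intro y hy z hz
    rw [hS] at hz
    have := h2 hy
    simp only [Finset.mem_insert, Finset.mem_erase] at this
    rcases this with rfl | ⟨hne, h3⟩
    · by_cases hzN : z = k + 1
      · omega
      · simp only [contr, hzN, if_false, if_true] at hz
        have := h.max x hx z hz
        omega
    · have h5 := Finset.mem_Icc.1 (h.sub h3)
      have hyN : y ≠ k + 1 := by omega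
      by_cases hzN : z = k + 1
      · simp only [contr, hzN, hyN, if_false, if_true] at hz
        have := h.max x hx y hz.symm
        have := h.max y h3 x hz
        omega
      · simp only [contr, hzN, hyN, if_false] at hz
        exact h.max y h3 z hz

lemma InQ.bwd {k : ℕ} {π' : Equiv.Perm ℕ} {L' : Finset ℕ} (h : InQ (k + 1) π' L')
    (hne : π' (k + 1) ≠ k + 1) :
    InQ k (Equiv.swap (π' (k + 1)) (k + 1) * π') (insert (π' (k + 1)) (L'.erase (k + 1))) ∧
      π' (k + 1) ∉ L' := by
  set x := π' (k + 1) with hxdef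
  have hxx : π' x ≠ x := fun h => hne (π'.injective h)
  have hxk : 1 ≤ x ∧ x ≤ k := by
    by_contra hc
    apply hxx
    apply h.out
    simp only [Finset.mem_Icc]
    omega
  set π := Equiv.swap x (k + 1) * π' with hπ
  have hN : π (k + 1) = k + 1 := by simp [hπ, ← hxdef]
  have hπ' : π' = Equiv.swap x (k + 1) * π := by
    rw [hπ, ← mul_assoc, Equiv.swap_mul_self, one_mul]
  have hS := fun y z => sameCycle_swap_mul hN hne y z
  rw [← hπ'] at hS
  have hxN' : π'.SameCycle (k + 1) x := ⟨1, by simp [hxdef]⟩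
  have hle : ∀ z, π'.SameCycle x z → z ≤ k + 1 := by
    intro z hz
    by_contra hc
    have hzf : π' z = z := h.out _ (by simp; omega)
    have : z = x := by
      obtain ⟨i, hi⟩ := hz.symm
      rw [← hi, Equiv.Perm.zpow_apply_eq_self_of_apply_eq_self hzf]
    omega
  -- the minimum of the cycle of `k+1`
  set p := π'⁻¹ (k + 1) with hp
  have hpp : π' p = k + 1 := by simp [hp]
  have hpx : π'.SameCycle x p := by
    refine hxN'.symm.trans ⟨-1, by simp [hp]⟩
  have hpN : p ≠ k + 1 := by
    intro h; rw [h] at hpp; exact hne hpp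
  have hpmin : ∀ z, π'.SameCycle x z → p ≤ z := by
    intro z hz
    by_contra hc
    have := h.dec p (by rw [hpp]; exact hpN.symm) ⟨z, hpx.symm.trans hz, by omega⟩
    have := hle p hpx
    omega
  have hmax : ∀ d z, z + d = k + 1 → π'.SameCycle x z → z ≠ k + 1 → z ≤ x := by
    intro d
    induction d using Nat.strong_induction_on with
    | _ d ih =>
      intro z hzd hz hzN
      by_contra hc
      obtain ⟨q, hq⟩ : ∃ q, π' q = z := ⟨π'⁻¹ z, by simp⟩
      have hqz : π'.SameCycle x q := by
        rw [← hq] at hz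
        simpa using hz
      have hqN : q ≠ k + 1 := by rintro rfl; omega
      have hqle := hle q hqz
      rcases lt_trichotomy q z with h1 | h1 | h1
      · by_cases h2 : ∃ y, π'.SameCycle q y ∧ y < q
        · have := h.dec q (by omega) h2
          omega
        · push Not at h2
          have h3 := h2 p (hqz.symm.trans hpx)
          have h4 := hpmin q hqz
          have : q = p := by omega
          rw [this, hpp] at hq
          exact hzN hq.symm
      · have : x = z := by
          rw [h1] at hq
          obtain ⟨i, hi⟩ := hz.symm
          rw [← hi, Equiv.Perm.zpow_apply_eq_self_of_apply_eq_self hq]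
        omega
      · have := ih (k + 1 - q) (by omega) q (by omega) hqz hqN
        omega
  have hxL : x ∉ L' := by
    intro hx
    have := h.max x hx _ hxN'.symm
    omega
  have hcN : ∀ z, π.SameCycle (k + 1) z → z = k + 1 := by
    rintro z ⟨i, hi⟩
    rw [← hi, Equiv.Perm.zpow_apply_eq_self_of_apply_eq_self hN]
  have hS2 : ∀ y z, y ≠ k + 1 → π.SameCycle y z → z ≠ k + 1 ∧ π'.SameCycle y z := by
    intro y z hy hyz
    have hz : z ≠ k + 1 := by
      rintro rfl
      exact hy (hcN _ hyz.symm)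
    refine ⟨hz, ?_⟩
    rw [hS]
    simpa [contr, hy, hz] using hyz
  have hπeq : ∀ y, y ≠ k + 1 → π' y ≠ k + 1 → π y = π' y := by
    intro y hy hy'
    simp only [hπ, Equiv.Perm.mul_apply]
    refine Equiv.swap_apply_of_ne_of_ne ?_ hy'
    intro h; exact hy (π'.injective h)
  refine ⟨⟨?_, ?_, ?_, ?_, ?_⟩, hxL⟩
  · intro y hy
    by_cases hyN : y = k + 1
    · rw [hyN]; exact hN
    have h1 : π' y = y := by
      apply h.out
      simp at hy ⊢; omega
    rw [hπeq y hyN (by rw [h1]; exact hyN), h1]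
  · rintro y hy ⟨z, hz, hzy⟩
    have hyN : y ≠ k + 1 := by rintro rfl; exact hy hN
    obtain ⟨hzN, hz'⟩ := hS2 y z hyN hz
    have hy' : π' y ≠ y := by
      intro h1
      exact hy (by rw [hπeq y hyN (by rw [h1]; exact hyN), h1])
    have hyk : y ≤ k := by
      by_contra hc
      exact hy' (h.out _ (by simp; omega))
    have h2 := h.dec y hy' ⟨z, hz', hzy⟩
    rwa [hπeq y hyN (by omega)]
  · intro y hy
    simp only [Finset.mem_insert, Finset.mem_erase] at hy
    rcases hy with rfl | ⟨h1, h2⟩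
    · simp; omega
    · have := Finset.mem_Icc.1 (h.sub h2)
      simp; omega
  · intro y hy hfix
    simp only [Finset.mem_insert, Finset.mem_erase]
    by_cases hyx : y = x
    · exact Or.inl hyx
    have hyN : y ≠ k + 1 := by
      rintro rfl; simp at hy
    refine Or.inr ⟨hyN, h.fix _ (by simp at hy ⊢; omega) ?_⟩
    rw [hπ']
    simp only [Equiv.Perm.mul_apply, hfix]
    exact Equiv.swap_apply_of_ne_of_ne hyx hyN
  · intro y hy z hz
    simp only [Finset.mem_insert, Finset.mem_erase] at hy
    rcases hy with rfl | ⟨h1, h2⟩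
    · obtain ⟨hzN, hz'⟩ := hS2 _ z hne hz
      have := hle z hz'
      exact hmax (k + 1 - z) z (by omega) hz' hzN
    · obtain ⟨hzN, hz'⟩ := hS2 _ z h1 hz
      exact h.max y h2 z hz'

lemma InQ.fwd_fix {k : ℕ} {π : Equiv.Perm ℕ} {L : Finset ℕ} (h : InQ k π L) :
    InQ (k + 1) π (insert (k + 1) L) := by
  have hN : π (k + 1) = k + 1 := h.out _ (by simp)
  refine ⟨?_, h.dec, ?_, ?_, ?_⟩
  · intro y hy
    apply h.out
    simp at hy ⊢; omega
  · intro y hy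
    simp only [Finset.mem_insert] at hy
    rcases hy with rfl | h3
    · simp
    · have := Finset.mem_Icc.1 (h.sub h3)
      simp; omega
  · intro y hy hf
    simp only [Finset.mem_insert]
    by_cases hyN : y = k + 1
    · exact Or.inl hyN
    · exact Or.inr (h.fix y (by simp at hy ⊢; omega) hf)
  · intro y hy z hz
    simp only [Finset.mem_insert] at hy
    rcases hy with rfl | h3
    · obtain ⟨i, hi⟩ := hz
      rw [← hi, Equiv.Perm.zpow_apply_eq_self_of_apply_eq_self hN]
    · exact h.max y h3 z hz

lemma InQ.bwd_fix {k : ℕ} {π : Equiv.Perm ℕ} {L : Finset ℕ} (h : InQ (k + 1) π L)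
    (hN : π (k + 1) = k + 1) : InQ k π (L.erase (k + 1)) ∧ k + 1 ∈ L := by
  refine ⟨⟨?_, h.dec, ?_, ?_, ?_⟩, h.fix _ (by simp) hN⟩
  · intro y hy
    by_cases hyN : y = k + 1
    · rw [hyN, hN]
    · apply h.out
      simp at hy ⊢; omega
  · intro y hy
    simp only [Finset.mem_erase] at hy
    have := Finset.mem_Icc.1 (h.sub hy.2)
    simp; omega
  · intro y hy hf
    simp only [Finset.mem_erase]
    simp at hy
    exact ⟨by omega, h.fix y (by simp; omega) hf⟩
  · intro y hy z hz
    exact h.max y (Finset.mem_of_mem_erase hy) z hz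

/-- pairs with a given number of labels. -/
def PQ (k m : ℕ) : Type := {q : Equiv.Perm ℕ × Finset ℕ // InQ k q.1 q.2 ∧ q.2.card = m}

lemma PQ_zero (k : ℕ) (m : ℕ) (h : k < m) : IsEmpty (PQ k m) := by
  refine ⟨fun q => ?_⟩
  have := Finset.card_le_card q.2.1.sub
  rw [q.2.2] at this
  simp at this
  omega

lemma PQ_base : Nonempty (Unique (PQ 0 0)) := by
  refine ⟨⟨⟨⟨(1, ∅), ⟨?_, ?_, ?_, ?_, ?_⟩, rfl⟩⟩, ?_⟩⟩
  · simp
  · intro x hx; simp at hx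
  · simp
  · simp
  · simp
  · rintro ⟨⟨π, L⟩, h, h0⟩
    apply Subtype.ext
    apply Prod.ext
    · apply Equiv.ext
      intro x
      exact h.out x (by simp)
    · simpa using h0

/-- The recursive map. -/
def recMap (k m : ℕ) : (({q : Equiv.Perm ℕ × Finset ℕ // InQ k q.1 q.2 ∧ q.2.card + 1 = m}) ⊕
    (Σ q : PQ k m, {x // x ∈ q.1.2})) ⊕ (Σ q : PQ k (m + 1), {x // x ∈ q.1.2}) → PQ (k + 1) m
  | .inl (.inl q) => ⟨(q.1.1, insert (k + 1) q.1.2), q.2.1.fwd_fix, by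
      rw [Finset.card_insert_of_notMem, q.2.2]
      intro h; have := q.2.1.sub h; simp at this⟩
  | .inl (.inr ⟨q, x⟩) => ⟨(Equiv.swap x.1 (k + 1) * q.1.1, insert (k + 1) (q.1.2.erase x.1)),
      q.2.1.fwd x.2 (Finset.subset_insert _ _) (Finset.Subset.refl _), by
      rw [Finset.card_insert_of_notMem, Finset.card_erase_add_one x.2, q.2.2]
      intro h; have := q.2.1.sub (Finset.mem_of_mem_erase h); simp at this⟩
  | .inr ⟨q, x⟩ => ⟨(Equiv.swap x.1 (k + 1) * q.1.1, q.1.2.erase x.1),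
      q.2.1.fwd x.2 (Finset.Subset.refl _) (Finset.subset_insert _ _), by
      have := Finset.card_erase_add_one x.2
      have := q.2.2
      change (q.1.2.erase x.1).card = m
      omega⟩

lemma recMap_inj (k m : ℕ) : Function.Injective (recMap k m) := by
  have hQN : ∀ {π : Equiv.Perm ℕ} {L : Finset ℕ}, InQ k π L → π (k + 1) = k + 1 ∧ k + 1 ∉ L := by
    intro π L h
    exact ⟨h.out _ (by simp), fun h' => by have := h.sub h'; simp at this⟩
  have hap : ∀ {π : Equiv.Perm ℕ} {L : Finset ℕ} (x : ℕ), InQ k π L →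
      (Equiv.swap x (k + 1) * π) (k + 1) = x := by
    intro π L x h
    simp [(hQN h).1]
  have hne : ∀ {π : Equiv.Perm ℕ} {L : Finset ℕ} {x : ℕ}, InQ k π L → x ∈ L → x ≠ k + 1 := by
    intro π L x h hx h'
    subst h'
    exact (hQN h).2 hx
  rintro ((⟨⟨π, L⟩, h, hc⟩ | ⟨⟨⟨π, L⟩, h, hc⟩, x, hx⟩) | ⟨⟨⟨π, L⟩, h, hc⟩, x, hx⟩)
    ((⟨⟨π', L'⟩, h', hc'⟩ | ⟨⟨⟨π', L'⟩, h', hc'⟩, x', hx'⟩) | ⟨⟨⟨π', L'⟩, h', hc'⟩, x', hx'⟩) heq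
  all_goals
    have h1 := congrArg (fun q => q.1.1) heq
    have h2 := congrArg (fun q => q.1.2) heq
    simp only [recMap] at h1 h2
    simp only at h h' hc hc'
  · subst h1
    have : L = L' := by
      rw [← Finset.erase_insert (hQN h).2, h2, Finset.erase_insert (hQN h').2]
    subst this
    rfl
  · exfalso
    have := hap x' h'
    rw [← h1, (hQN h).1] at this
    exact hne h' hx' this.symm
  · exfalso
    have := hap x' h'
    rw [← h1, (hQN h).1] at this
    exact hne h' hx' this.symm
  · exfalso
    have := hap x h
    rw [h1, (hQN h').1] at this
    exact hne h hx this.symm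
  · have h3 : x = x' := by rw [← hap x h, h1, hap x' h']
    subst h3
    have h4 := mul_left_cancel h1
    subst h4
    have h5 : L.erase x = L'.erase x := by
      rw [← Finset.erase_insert (s := L.erase x) (a := k + 1), h2, Finset.erase_insert]
      · exact fun h'' => (hQN h').2 (Finset.mem_of_mem_erase h'')
      · exact fun h'' => (hQN h).2 (Finset.mem_of_mem_erase h'')
    have : L = L' := by
      rw [← Finset.insert_erase (s := L) hx, h5, Finset.insert_erase (s := L') hx']
    subst this
    rfl
  · exfalso
    have : k + 1 ∈ L'.erase x' := by rw [← h2]; exact Finset.mem_insert_self _ _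
    exact (hQN h').2 (Finset.mem_of_mem_erase this)
  · exfalso
    have := hap x h
    rw [h1, (hQN h').1] at this
    exact hne h hx this.symm
  · exfalso
    have : k + 1 ∈ L.erase x := by rw [h2]; exact Finset.mem_insert_self _ _
    exact (hQN h).2 (Finset.mem_of_mem_erase this)
  · have h3 : x = x' := by rw [← hap x h, h1, hap x' h']
    subst h3
    have h4 := mul_left_cancel h1
    subst h4
    have : L = L' := by
      rw [← Finset.insert_erase (s := L) hx, h2, Finset.insert_erase (s := L') hx']
    subst this
    rfl

lemma recMap_surj (k m : ℕ) : Function.Surjective (recMap k m) := by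
  rintro ⟨⟨π, L⟩, h, hc⟩
  simp only at h hc
  by_cases hN : π (k + 1) = k + 1
  · obtain ⟨h1, h2⟩ := h.bwd_fix hN
    refine ⟨.inl (.inl ⟨(π, L.erase (k + 1)), h1, ?_⟩), ?_⟩
    · change (L.erase (k + 1)).card + 1 = m
      rw [Finset.card_erase_add_one h2, hc]
    · apply Subtype.ext
      simp [recMap, Finset.insert_erase h2]
  · obtain ⟨h1, h2⟩ := h.bwd hN
    have h3 : π (k + 1) ∉ L.erase (k + 1) := fun h => h2 (Finset.mem_of_mem_erase h)
    have h4 := Finset.card_insert_of_notMem h3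
    by_cases hL : k + 1 ∈ L
    · refine ⟨.inl (.inr ⟨⟨(Equiv.swap (π (k + 1)) (k + 1) * π,
        insert (π (k + 1)) (L.erase (k + 1))), h1, ?_⟩, ⟨π (k + 1), Finset.mem_insert_self _ _⟩⟩), ?_⟩
      · change (insert (π (k + 1)) (L.erase (k + 1))).card = m
        rw [h4, Finset.card_erase_add_one hL, hc]
      · apply Subtype.ext
        simp only [recMap, Finset.erase_insert h3, Finset.insert_erase hL]
        rw [← mul_assoc, Equiv.swap_mul_self, one_mul]
    · rw [Finset.erase_eq_of_notMem hL] at h1 h4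
      refine ⟨.inr ⟨⟨(Equiv.swap (π (k + 1)) (k + 1) * π,
        insert (π (k + 1)) L), h1, ?_⟩, ⟨π (k + 1), Finset.mem_insert_self _ _⟩⟩, ?_⟩
      · change (insert (π (k + 1)) L).card = m + 1
        rw [h4, hc]
      · apply Subtype.ext
        simp only [recMap, Finset.erase_insert h2]
        rw [← mul_assoc, Equiv.swap_mul_self, one_mul]

lemma PQ_finite (k : ℕ) : ∀ m, Finite (PQ k m) := by
  induction k with
  | zero =>
    intro m
    rcases Nat.eq_zero_or_pos m with rfl | hm
    · obtain ⟨h⟩ := PQ_base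
      infer_instance
    · have := PQ_zero 0 m hm
      infer_instance
  | succ k ih =>
    intro m
    have := ih
    have : Finite {q : Equiv.Perm ℕ × Finset ℕ // InQ k q.1 q.2 ∧ q.2.card + 1 = m} := by
      cases m with
      | zero => 
        refine @Finite.of_subsingleton _ ⟨fun q => ?_⟩
        exact absurd q.2.2 (by omega)
      | succ m =>
        have := ih m
        simp only [Nat.add_right_cancel_iff]
        exact this
    exact Finite.of_surjective _ (recMap_surj k m)

/-- number of admissible pairs -/
noncomputable def AQ (k m : ℕ) : ℕ := Nat.card (PQ k m)

lemma AQ_zero_zero : AQ 0 0 = 1 := by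
  obtain ⟨h⟩ := PQ_base
  exact Nat.card_unique

lemma AQ_eq_zero {k m : ℕ} (h : k < m) : AQ k m = 0 := by
  have := PQ_zero k m h
  exact Nat.card_of_isEmpty

lemma card_sigma_PQ (k m : ℕ) : Nat.card (Σ q : PQ k m, {x // x ∈ q.1.2}) = AQ k m * m := by
  have := PQ_finite k m
  have := Fintype.ofFinite (PQ k m)
  rw [Nat.card_sigma]
  have : ∀ q : PQ k m, Nat.card {x // x ∈ q.1.2} = m := by
    intro q
    simp [q.2.2]
  simp only [this]
  simp [AQ]

lemma AQ_succ_zero (k : ℕ) : AQ (k + 1) 0 = AQ k 1 := by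
  have := PQ_finite k
  have h0 : IsEmpty {q : Equiv.Perm ℕ × Finset ℕ // InQ k q.1 q.2 ∧ q.2.card + 1 = 0} :=
    ⟨fun q => absurd q.2.2 (by omega)⟩
  have h := Nat.card_congr (Equiv.ofBijective _ ⟨recMap_inj k 0, recMap_surj k 0⟩)
  rw [Nat.card_sum, Nat.card_sum, card_sigma_PQ, card_sigma_PQ, Nat.card_of_isEmpty] at h
  change _ = AQ (k + 1) 0 at h
  rw [← h]
  simp

lemma AQ_succ_succ (k m : ℕ) : AQ (k + 1) (m + 1) =
    AQ k m + (m + 1) * AQ k (m + 1) + (m + 2) * AQ k (m + 2) := by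
  have := PQ_finite k
  have h := Nat.card_congr (Equiv.ofBijective _ ⟨recMap_inj k (m + 1), recMap_surj k (m + 1)⟩)
  have h1 : Nat.card {q : Equiv.Perm ℕ × Finset ℕ // InQ k q.1 q.2 ∧ q.2.card + 1 = m + 1} =
      AQ k m := by
    simp only [Nat.add_right_cancel_iff]
    rfl
  have : Finite {q : Equiv.Perm ℕ × Finset ℕ // InQ k q.1 q.2 ∧ q.2.card + 1 = m + 1} := by
    simp only [Nat.add_right_cancel_iff]
    exact this m
  rw [Nat.card_sum, Nat.card_sum, card_sigma_PQ, card_sigma_PQ, h1] at h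
  change _ = AQ (k + 1) (m + 1) at h
  rw [← h]
  ring

/-! ### The Young lattice -/

lemma lt_card_of_mem {μ : YoungDiagram} {i j : ℕ} (h : (i, j) ∈ μ) : i < μ.card ∧ j < μ.card := by
  constructor
  · have h1 := YoungDiagram.mem_iff_lt_colLen.1 h
    rw [YoungDiagram.colLen_eq_card] at h1
    exact lt_of_lt_of_le h1 (Finset.card_le_card (Finset.filter_subset _ _))
  · have h1 := YoungDiagram.mem_iff_lt_rowLen.1 h
    rw [YoungDiagram.rowLen_eq_card] at h1
    exact lt_of_lt_of_le h1 (Finset.card_le_card (Finset.filter_subset _ _))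

lemma finite_card_le (N : ℕ) : {μ : YoungDiagram | μ.card ≤ N}.Finite := by
  have h : {μ : YoungDiagram | μ.card ≤ N} ⊆
      YoungDiagram.cells ⁻¹' (↑((Finset.range N ×ˢ Finset.range N).powerset) : Set _) := by
    intro μ hμ
    simp only [Set.mem_preimage, Finset.mem_coe, Finset.mem_powerset]
    rintro ⟨i, j⟩ hc
    have := lt_card_of_mem (YoungDiagram.mem_cells _ |>.1 hc)
    have hμ' : μ.card ≤ N := hμ
    simp
    omega
  refine Set.Finite.subset (Set.Finite.preimage ?_ (Finset.finite_toSet _)) h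
  intro μ _ ν _ h
  exact YoungDiagram.ext h

/-- diagrams with at most `N` cells -/
noncomputable def Yle (N : ℕ) : Finset YoungDiagram := (finite_card_le N).toFinset

lemma mem_Yle {N : ℕ} {μ : YoungDiagram} : μ ∈ Yle N ↔ μ.card ≤ N := by
  simp [Yle]

open Classical in
/-- diagrams covered by `α` -/
noncomputable def Dn (α : YoungDiagram) : Finset YoungDiagram :=
  (Yle α.card).filter fun β => β ≤ α ∧ β.card + 1 = α.card

open Classical in
/-- diagrams covering `α` -/
noncomputable def Up (α : YoungDiagram) : Finset YoungDiagram :=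
  (Yle (α.card + 1)).filter fun γ => α ≤ γ ∧ γ.card = α.card + 1

lemma mem_Dn {α β : YoungDiagram} : β ∈ Dn α ↔ β ≤ α ∧ β.card + 1 = α.card := by
  simp only [Dn, Finset.mem_filter, mem_Yle]
  constructor
  · exact fun h => h.2
  · exact fun h => ⟨by omega, h⟩

lemma mem_Up {α γ : YoungDiagram} : γ ∈ Up α ↔ α ≤ γ ∧ γ.card = α.card + 1 := by
  simp only [Up, Finset.mem_filter, mem_Yle]
  constructor
  · exact fun h => h.2
  · exact fun h => ⟨by omega, h⟩

lemma mem_Up_iff_mem_Dn {α γ : YoungDiagram} : γ ∈ Up α ↔ α ∈ Dn γ := by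
  rw [mem_Up, mem_Dn, eq_comm]

lemma card_le_of_le {α β : YoungDiagram} (h : α ≤ β) : α.card ≤ β.card :=
  Finset.card_le_card (YoungDiagram.cells_subset_iff.2 h)

lemma eq_of_le_of_card {α β : YoungDiagram} (h : α ≤ β) (hc : β.card ≤ α.card) : α = β :=
  YoungDiagram.ext (Finset.eq_of_subset_of_card_le (YoungDiagram.cells_subset_iff.2 h) hc)

lemma card_sup_add_inf (α β : YoungDiagram) :
    (α ⊔ β).card + (α ⊓ β).card = α.card + β.card :=
  Finset.card_union_add_card_inter _ _

lemma exists_cell_of_Dn {α β : YoungDiagram} (h : β ∈ Dn α) :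
    ∃ c, c ∉ β ∧ c ∈ α ∧ (∀ d, d ∈ α ↔ d = c ∨ d ∈ β) := by
  rw [mem_Dn] at h
  have h1 := Finset.card_sdiff_add_card_eq_card (YoungDiagram.cells_subset_iff.2 h.1)
  have h2 : (α.cells \ β.cells).card = 1 := by
    have := h.2
    simp only [YoungDiagram.card] at this
    omega
  obtain ⟨c, hc⟩ := Finset.card_eq_one.1 h2
  have hc' : ∀ d, d ∈ α ∧ d ∉ β ↔ d = c := by
    intro d
    have := Finset.ext_iff.1 hc d
    simpa using this
  refine ⟨c, ((hc' c).2 rfl).2, ((hc' c).2 rfl).1, fun d => ?_⟩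
  have h3 : d ∈ β → d ∈ α := fun hd => h.1 hd
  have := hc' d
  tauto

lemma sum_gen (α : YoungDiagram) (F : YoungDiagram → ℕ) (hUD : (Up α).card = (Dn α).card + 1) :
    ∑ γ ∈ Up α, ∑ δ ∈ Dn γ, F δ = F α + ∑ β ∈ Dn α, ∑ δ ∈ Up β, F δ := by
  classical
  have h1 : ∀ γ ∈ Up α, ∑ δ ∈ Dn γ, F δ = F α + ∑ δ ∈ (Dn γ).erase α, F δ := by
    intro γ hγ
    rw [Finset.add_sum_erase _ _ (mem_Up_iff_mem_Dn.1 hγ)]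
  have h2 : ∀ β ∈ Dn α, ∑ δ ∈ Up β, F δ = F α + ∑ δ ∈ (Up β).erase α, F δ := by
    intro β hβ
    rw [Finset.add_sum_erase _ _ (mem_Up_iff_mem_Dn.2 hβ)]
  rw [Finset.sum_congr rfl h1, Finset.sum_congr rfl h2, Finset.sum_add_distrib,
    Finset.sum_add_distrib, Finset.sum_const, Finset.sum_const, hUD]
  have h3 : ∑ γ ∈ Up α, ∑ δ ∈ (Dn γ).erase α, F δ = ∑ β ∈ Dn α, ∑ δ ∈ (Up β).erase α, F δ := by
    rw [Finset.sum_sigma', Finset.sum_sigma']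
    refine Finset.sum_bij' (fun x _ => ⟨α ⊓ x.2, x.2⟩) (fun x _ => ⟨α ⊔ x.2, x.2⟩) ?_ ?_ ?_ ?_ ?_
    · rintro ⟨γ, δ⟩ h
      simp only [Finset.mem_sigma, Finset.mem_erase, mem_Up, mem_Dn] at h ⊢
      obtain ⟨⟨a1, a2⟩, a3, a4, a5⟩ := h
      have b1 := card_sup_add_inf α δ
      have b2 := card_le_of_le (sup_le a1 a4)
      have b3 : (α ⊔ δ).card ≠ α.card := by
        intro h
        have := eq_of_le_of_card (le_sup_left : α ≤ α ⊔ δ) h.le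
        have h6 : δ ≤ α := by rw [this]; exact le_sup_right
        exact a3 (eq_of_le_of_card h6 (by omega))
      have b4 := card_le_of_le (le_sup_left : α ≤ α ⊔ δ)
      exact ⟨⟨inf_le_left, by omega⟩, a3, inf_le_right, by omega⟩
    · rintro ⟨β, δ⟩ h
      simp only [Finset.mem_sigma, Finset.mem_erase, mem_Up, mem_Dn] at h ⊢
      obtain ⟨⟨a1, a2⟩, a3, a4, a5⟩ := h
      have b1 := card_sup_add_inf α δ
      have b2 := card_le_of_le (le_inf a1 a4)
      have b3 : (α ⊓ δ).card ≠ α.card := by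
        intro h
        have := eq_of_le_of_card (inf_le_left : α ⊓ δ ≤ α) h.ge
        have h6 : α ≤ δ := by rw [← this]; exact inf_le_right
        exact a3 (eq_of_le_of_card h6 (by omega)).symm
      have b4 := card_le_of_le (inf_le_left : α ⊓ δ ≤ α)
      exact ⟨⟨le_sup_left, by omega⟩, a3, le_sup_right, by omega⟩
    · rintro ⟨γ, δ⟩ h
      simp only [Finset.mem_sigma, Finset.mem_erase, mem_Up, mem_Dn] at h ⊢
      obtain ⟨⟨a1, a2⟩, a3, a4, a5⟩ := h
      have b3 : (α ⊔ δ).card ≠ α.card := by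
        intro h
        have := eq_of_le_of_card (le_sup_left : α ≤ α ⊔ δ) h.le
        have h6 : δ ≤ α := by rw [this]; exact le_sup_right
        exact a3 (eq_of_le_of_card h6 (by omega))
      have b4 := card_le_of_le (le_sup_left : α ≤ α ⊔ δ)
      have := eq_of_le_of_card (sup_le a1 a4) (by omega)
      rw [this]
    · rintro ⟨β, δ⟩ h
      simp only [Finset.mem_sigma, Finset.mem_erase, mem_Up, mem_Dn] at h ⊢
      obtain ⟨⟨a1, a2⟩, a3, a4, a5⟩ := h
      have b3 : (α ⊓ δ).card ≠ α.card := by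
        intro h
        have := eq_of_le_of_card (inf_le_left : α ⊓ δ ≤ α) h.ge
        have h6 : α ≤ δ := by rw [← this]; exact inf_le_right
        exact a3 (eq_of_le_of_card h6 (by omega)).symm
      have b4 := card_le_of_le (inf_le_left : α ⊓ δ ≤ α)
      have := eq_of_le_of_card (le_inf a1 a4) (by omega)
      rw [this]
    · rintro ⟨γ, δ⟩ h
      rfl
  rw [h3]
  simp only [smul_eq_mul]
  ring

/-- rows from which a cell can be removed -/
def Rrows (α : YoungDiagram) : Finset ℕ :=
  (Finset.range α.card).filter fun i => α.rowLen (i + 1) < α.rowLen i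

lemma mem_Rrows {α : YoungDiagram} {i : ℕ} : i ∈ Rrows α ↔ α.rowLen (i + 1) < α.rowLen i := by
  simp only [Rrows, Finset.mem_filter, Finset.mem_range, and_iff_right_iff_imp]
  intro h
  exact (lt_card_of_mem (YoungDiagram.mem_iff_lt_rowLen.2 h)).1

/-- remove the corner in row `i`. -/
def delRow (α : YoungDiagram) (i : ℕ) (h : α.rowLen (i + 1) < α.rowLen i) : YoungDiagram where
  cells := α.cells.erase (i, α.rowLen i - 1)
  isLowerSet := by
    rintro ⟨a, b⟩ ⟨a', b'⟩ ⟨h1, h2⟩ h3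
    simp only [Finset.coe_erase, Set.mem_sdiff, Finset.mem_coe, YoungDiagram.mem_cells,
      Set.mem_singleton_iff, Prod.mk.injEq, not_and] at h1 h2 h3 ⊢
    refine ⟨α.up_left_mem h1 h2 h3.1, ?_⟩
    rintro rfl rfl
    have h4 := YoungDiagram.mem_iff_lt_rowLen.1 h3.1
    rcases Nat.lt_or_ge a' a with h5 | h5
    · have := α.rowLen_anti (a' + 1) a h5
      omega
    · have h6 : a = a' := le_antisymm h5 h1
      subst h6
      have := h3.2 rfl
      omega

/-- add a cell in row `i`. -/
def addRow (α : YoungDiagram) (i : ℕ) (h : i = 0 ∨ α.rowLen i < α.rowLen (i - 1)) :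
    YoungDiagram where
  cells := insert (i, α.rowLen i) α.cells
  isLowerSet := by
    rintro ⟨a, b⟩ ⟨a', b'⟩ ⟨h1, h2⟩ h3
    simp only [Finset.coe_insert, Set.mem_insert_iff, Finset.mem_coe, YoungDiagram.mem_cells,
      Prod.mk.injEq] at h1 h2 h3 ⊢
    rcases h3 with ⟨rfl, rfl⟩ | h3
    · by_cases h4 : a' = a ∧ b' = α.rowLen a
      · exact Or.inl h4
      · right
        rw [YoungDiagram.mem_iff_lt_rowLen]
        rcases Nat.lt_or_ge a' a with h5 | h5
        · have := α.rowLen_anti a' (a - 1) (by omega)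
          omega
        · have h6 : a = a' := le_antisymm h5 h1
          subst h6
          omega
    · exact Or.inr (α.up_left_mem h1 h2 h3)

lemma card_Dn (α : YoungDiagram) : (Dn α).card = (Rrows α).card := by
  symm
  refine Finset.card_bij (fun i hi => delRow α i (mem_Rrows.1 hi)) ?_ ?_ ?_
  · intro i hi
    have hi' := mem_Rrows.1 hi
    have hm : (i, α.rowLen i - 1) ∈ α.cells :=
      (YoungDiagram.mem_cells _).2 (YoungDiagram.mem_iff_lt_rowLen.2 (by omega))
    rw [mem_Dn]
    exact ⟨YoungDiagram.cells_subset_iff.1 (Finset.erase_subset _ _),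
      Finset.card_erase_add_one hm⟩
  · intro i hi j hj h
    by_contra hne
    have hi' := mem_Rrows.1 hi
    have hm : (i, α.rowLen i - 1) ∈ α.cells :=
      (YoungDiagram.mem_cells _).2 (YoungDiagram.mem_iff_lt_rowLen.2 (by omega))
    have h1 := congrArg YoungDiagram.cells h
    simp only [delRow] at h1
    have h2 := Finset.ext_iff.1 h1 (i, α.rowLen i - 1)
    simp only [Finset.mem_erase, hm] at h2
    simp [hne] at h2
  · intro β hβ
    obtain ⟨⟨i, j⟩, hc1, hc2, hc3⟩ := exists_cell_of_Dn hβ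
    have h1 : j + 1 = α.rowLen i := by
      have h2 := YoungDiagram.mem_iff_lt_rowLen.1 hc2
      by_contra hne
      have h3 : (i, j + 1) ∈ α := YoungDiagram.mem_iff_lt_rowLen.2 (by omega)
      rw [hc3] at h3
      simp at h3
      exact hc1 (β.up_left_mem le_rfl (by omega) h3)
    have h2 : α.rowLen (i + 1) < α.rowLen i := by
      by_contra hne
      have h3 : (i + 1, j) ∈ α := YoungDiagram.mem_iff_lt_rowLen.2 (by omega)
      rw [hc3] at h3
      simp at h3
      exact hc1 (β.up_left_mem (by omega) le_rfl h3)
    refine ⟨i, mem_Rrows.2 h2, ?_⟩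
    apply YoungDiagram.ext
    ext d
    have h4 : α.rowLen i - 1 = j := by omega
    simp only [delRow, Finset.mem_erase, YoungDiagram.mem_cells, hc3, h4]
    constructor
    · tauto
    · intro hd
      refine ⟨?_, Or.inr hd⟩
      rintro rfl
      exact hc1 hd

lemma card_Up (α : YoungDiagram) : (Up α).card = (Dn α).card + 1 := by
  rw [card_Dn]
  have h0 : 0 ∉ (Rrows α).image Nat.succ := by simp
  rw [← Finset.card_image_of_injective (Rrows α) Nat.succ_injective,
    ← Finset.card_insert_of_notMem h0]
  have hA : ∀ i, i ∈ insert 0 ((Rrows α).image Nat.succ) ↔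
      (i = 0 ∨ α.rowLen i < α.rowLen (i - 1)) := by
    intro i
    simp only [Finset.mem_insert, Finset.mem_image, mem_Rrows]
    constructor
    · rintro (h | ⟨a, h, rfl⟩)
      · exact Or.inl h
      · exact Or.inr (by simpa using h)
    · rintro (h | h)
      · exact Or.inl h
      · rcases i with _ | i
        · exact Or.inl rfl
        · exact Or.inr ⟨i, by simpa using h, rfl⟩
  symm
  have hn : ∀ i, (i, α.rowLen i) ∉ α.cells := by
    intro i
    rw [YoungDiagram.mem_cells, YoungDiagram.mem_iff_lt_rowLen]
    simp
  refine Finset.card_bij (fun i hi => addRow α i ((hA i).1 hi)) ?_ ?_ ?_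
  · intro i hi
    rw [mem_Up]
    exact ⟨YoungDiagram.cells_subset_iff.1 (Finset.subset_insert _ _),
      Finset.card_insert_of_notMem (hn i)⟩
  · intro i hi j hj h
    have h1 := congrArg YoungDiagram.cells h
    simp only [addRow] at h1
    have h2 := Finset.ext_iff.1 h1 (i, α.rowLen i)
    simp only [Finset.mem_insert, hn i] at h2
    simp at h2
    exact h2.1
  · intro γ hγ
    obtain ⟨⟨i, j⟩, hc1, hc2, hc3⟩ := exists_cell_of_Dn (mem_Up_iff_mem_Dn.1 hγ)
    have h1 : j = α.rowLen i := by
      rw [YoungDiagram.mem_iff_lt_rowLen] at hc1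
      by_contra hne
      have h3 : (i, α.rowLen i) ∈ γ := γ.up_left_mem le_rfl (by omega) hc2
      rw [hc3] at h3
      rcases h3 with h3 | h3
      · simp at h3; omega
      · exact hn i h3
    have h2 : i = 0 ∨ α.rowLen i < α.rowLen (i - 1) := by
      by_contra hne
      push Not at hne
      have h3 : (i - 1, j) ∈ γ := γ.up_left_mem (by omega) le_rfl hc2
      rw [hc3] at h3
      rcases h3 with h3 | h3
      · simp at h3; omega
      · rw [YoungDiagram.mem_iff_lt_rowLen] at h3; omega
    refine ⟨i, (hA i).2 h2, ?_⟩
    apply YoungDiagram.ext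
    ext d
    simp only [addRow, Finset.mem_insert, YoungDiagram.mem_cells, hc3, h1]

/-- number of standard tableaux, by recursion -/
noncomputable def gg : ℕ → YoungDiagram → ℕ
  | 0, _ => 1
  | m + 1, α => ∑ β ∈ Dn α, gg m β

/-- number of standard tableaux -/
noncomputable def g (α : YoungDiagram) : ℕ := gg α.card α

lemma g_sum_Dn {α : YoungDiagram} (h : α.card ≠ 0) : ∑ β ∈ Dn α, g β = g α := by
  obtain ⟨m, hm⟩ := Nat.exists_eq_succ_of_ne_zero h
  unfold g
  rw [hm, gg]
  refine Finset.sum_congr rfl fun β hβ => ?_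
  have := (mem_Dn.1 hβ).2
  rw [show β.card = m by omega]

lemma Dn_of_card_zero {α : YoungDiagram} (h : α.card = 0) : Dn α = ∅ := by
  ext β
  simp [mem_Dn, h]

lemma g_sum_Up (m : ℕ) : ∀ α : YoungDiagram, α.card = m →
    ∑ γ ∈ Up α, g γ = (m + 1) * g α := by
  induction m with
  | zero =>
    intro α hα
    have h1 : ∑ γ ∈ Up α, g γ = ∑ γ ∈ Up α, ∑ δ ∈ Dn γ, g δ := by
      refine Finset.sum_congr rfl fun γ hγ => ?_
      rw [g_sum_Dn]
      have := (mem_Up.1 hγ).2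
      omega
    rw [h1, sum_gen _ _ (card_Up α), Dn_of_card_zero hα]
    simp
  | succ m ih =>
    intro α hα
    have h1 : ∑ γ ∈ Up α, g γ = ∑ γ ∈ Up α, ∑ δ ∈ Dn γ, g δ := by
      refine Finset.sum_congr rfl fun γ hγ => ?_
      rw [g_sum_Dn]
      have := (mem_Up.1 hγ).2
      omega
    have h2 : ∀ β ∈ Dn α, ∑ δ ∈ Up β, g δ = (m + 1) * g β := by
      intro β hβ
      apply ih
      have := (mem_Dn.1 hβ).2
      omega
    rw [h1, sum_gen _ _ (card_Up α), Finset.sum_congr rfl h2, ← Finset.mul_sum,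
      g_sum_Dn (by omega)]
    ring

/-! ### Standard fillings -/

/-- standard fillings of `α` with label set `L` -/
structure IsST (α : YoungDiagram) (L : Finset ℕ) (f : ℕ × ℕ → ℕ) : Prop where
  zero : ∀ c, c ∉ α → f c = 0
  inj : ∀ c ∈ α, ∀ c' ∈ α, f c = f c' → c = c'
  row : ∀ i j1 j2 : ℕ, j1 < j2 → (i, j2) ∈ α → f (i, j1) < f (i, j2)
  col : ∀ i1 i2 j : ℕ, i1 < i2 → (i2, j) ∈ α → f (i1, j) < f (i2, j)
  img : ∀ x, x ∈ L ↔ ∃ c ∈ α, f c = x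

lemma IsST.ext_fwd {α β : YoungDiagram} {L : Finset ℕ} {M : ℕ} {f : ℕ × ℕ → ℕ}
    (hβ : β ∈ Dn α) (hM : M ∈ L) (hmax : ∀ x ∈ L, x ≤ M) (h : IsST β (L.erase M) f) :
    IsST α L (fun c => if c ∈ α ∧ c ∉ β then M else f c) := by
  obtain ⟨c, hc1, hc2, hc3⟩ := exists_cell_of_Dn hβ
  have hlt : ∀ d ∈ β, f d < M := by
    intro d hd
    have h1 := (h.img (f d)).2 ⟨d, hd, rfl⟩
    rw [Finset.mem_erase] at h1
    exact lt_of_le_of_ne (hmax _ h1.2) h1.1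
  have hc : ∀ d, (d ∈ α ∧ d ∉ β) ↔ d = c := by
    intro d
    rw [hc3]
    constructor
    · tauto
    · rintro rfl; exact ⟨Or.inl rfl, hc1⟩
  simp only [hc]
  have hnc : ∀ d ∈ β, d ≠ c := by rintro d hd rfl; exact hc1 hd
  refine ⟨?_, ?_, ?_, ?_, ?_⟩
  · intro d hd
    rw [hc3] at hd
    push Not at hd
    simp only [hd.1, if_false]
    exact h.zero d hd.2
  · intro d hd d' hd' heq
    rw [hc3] at hd hd'
    rcases hd with rfl | hd <;> rcases hd' with rfl | hd'
    · rfl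
    · simp only [if_true, hnc _ hd', if_false] at heq
      have := hlt _ hd'
      omega
    · simp only [if_true, hnc _ hd, if_false] at heq
      have := hlt _ hd
      omega
    · simp only [hnc _ hd, hnc _ hd', if_false] at heq
      exact h.inj _ hd _ hd' heq
  · intro i j1 j2 hj hm
    have hm1 : (i, j1) ∈ α := α.up_left_mem le_rfl hj.le hm
    rw [hc3] at hm hm1
    rcases hm with hm | hm
    · rcases hm1 with hm1 | hm1
      · rw [← hm] at hm1; simp at hm1; omega
      · simp only [hm, hnc _ hm1, if_true, if_false]
        exact hlt _ hm1
    · have hm1 : (i, j1) ∈ β := β.up_left_mem le_rfl hj.le hm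
      simp only [hnc _ hm, hnc _ hm1, if_false]
      exact h.row _ _ _ hj hm
  · intro i1 i2 j hj hm
    have hm1 : (i1, j) ∈ α := α.up_left_mem hj.le le_rfl hm
    rw [hc3] at hm hm1
    rcases hm with hm | hm
    · rcases hm1 with hm1 | hm1
      · rw [← hm] at hm1; simp at hm1; omega
      · simp only [hm, hnc _ hm1, if_true, if_false]
        exact hlt _ hm1
    · have hm1 : (i1, j) ∈ β := β.up_left_mem hj.le le_rfl hm
      simp only [hnc _ hm, hnc _ hm1, if_false]
      exact h.col _ _ _ hj hm
  · intro x
    have h1 := h.img x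
    rw [Finset.mem_erase] at h1
    constructor
    · intro hx
      by_cases hxM : x = M
      · exact ⟨c, hc2, by simp [hxM]⟩
      · obtain ⟨d, hd, hd'⟩ := h1.1 ⟨hxM, hx⟩
        exact ⟨d, (hc3 d).2 (Or.inr hd), by simp [hnc _ hd, hd']⟩
    · rintro ⟨d, hd, hd'⟩
      rw [hc3] at hd
      rcases hd with rfl | hd
      · simp at hd'; rwa [← hd']
      · simp only [hnc _ hd, if_false] at hd'
        exact (h1.2 ⟨d, hd, hd'⟩).2

lemma IsST.ext_bwd {α : YoungDiagram} {L : Finset ℕ} {M : ℕ} {f : ℕ × ℕ → ℕ}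
    (hM : M ∈ L) (hmax : ∀ x ∈ L, x ≤ M) (h : IsST α L f) :
    ∃ β ∈ Dn α, ∃ f', IsST β (L.erase M) f' ∧ (fun c => if c ∈ α ∧ c ∉ β then M else f' c) = f := by
  obtain ⟨c, hc, hcM⟩ := (h.img M).1 hM
  have hle : ∀ d ∈ α, f d ≤ M := fun d hd => hmax _ ((h.img _).2 ⟨d, hd, rfl⟩)
  let β : YoungDiagram :=
    { cells := α.cells.erase c
      isLowerSet := by
        rintro ⟨a, b⟩ ⟨a', b'⟩ ⟨h1, h2⟩ h3
        simp only [Finset.coe_erase, Set.mem_sdiff, Finset.mem_coe, YoungDiagram.mem_cells,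
          Set.mem_singleton_iff] at h1 h2 h3 ⊢
        have h4 : (a', b') ∈ α := α.up_left_mem h1 h2 h3.1
        refine ⟨h4, ?_⟩
        rintro rfl
        have h5 : (a, b') ∈ α := α.up_left_mem le_rfl h2 h3.1
        have e1 : f (a', b') ≤ f (a, b') := by
          rcases h1.eq_or_lt with rfl | h1
          · rfl
          · exact (h.col _ _ _ h1 h5).le
        have e2 : f (a, b') ≤ f (a, b) := by
          rcases h2.eq_or_lt with rfl | h2
          · rfl
          · exact (h.row _ _ _ h2 h3.1).le
        have e3 := hle _ h3.1
        exact h3.2 (h.inj _ h3.1 _ h4 (by omega)) }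
  have hβm : ∀ d, d ∈ β ↔ d ≠ c ∧ d ∈ α := by
    intro d
    change d ∈ α.cells.erase c ↔ _
    simp
  have hβ : β ∈ Dn α := by
    rw [mem_Dn]
    exact ⟨YoungDiagram.cells_subset_iff.1 (Finset.erase_subset _ _),
      Finset.card_erase_add_one ((YoungDiagram.mem_cells _).2 hc)⟩
  refine ⟨β, hβ, fun d => if d = c then 0 else f d, ⟨?_, ?_, ?_, ?_, ?_⟩, ?_⟩
  · intro d hd
    rw [hβm] at hd
    by_cases hdc : d = c
    · simp [hdc]
    · simp only [hdc, if_false]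
      exact h.zero d (by tauto)
  · intro d hd d' hd' heq
    rw [hβm] at hd hd'
    simp only [hd.1, hd'.1, if_false] at heq
    exact h.inj _ hd.2 _ hd'.2 heq
  · intro i j1 j2 hj hd
    have hd1 : (i, j1) ∈ β := β.up_left_mem le_rfl hj.le hd
    rw [hβm] at hd hd1
    simp only [hd.1, hd1.1, if_false]
    exact h.row _ _ _ hj hd.2
  · intro i1 i2 j hj hd
    have hd1 : (i1, j) ∈ β := β.up_left_mem hj.le le_rfl hd
    rw [hβm] at hd hd1
    simp only [hd.1, hd1.1, if_false]
    exact h.col _ _ _ hj hd.2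
  · intro x
    rw [Finset.mem_erase, h.img]
    constructor
    · rintro ⟨h1, d, hd, rfl⟩
      have hdc : d ≠ c := by rintro rfl; exact h1 hcM
      exact ⟨d, (hβm d).2 ⟨hdc, hd⟩, by simp [hdc]⟩
    · rintro ⟨d, hd, rfl⟩
      rw [hβm] at hd
      simp only [hd.1, if_false]
      exact ⟨fun h1 => hd.1 (h.inj _ hd.2 _ hc (h1.trans hcM.symm)), d, hd.2, rfl⟩
  · funext d
    by_cases hdc : d = c
    · subst hdc
      simp [hc, hβm, hcM]
    · have : ¬ (d ∈ α ∧ d ∉ β) := by rw [hβm]; tauto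
      simp only [this, if_false, hdc]

/-- the gluing map -/
def stMap (α : YoungDiagram) (L : Finset ℕ) (M : ℕ) (hM : M ∈ L) (hmax : ∀ x ∈ L, x ≤ M) :
    (Σ β : {β // β ∈ Dn α}, {f // IsST β.1 (L.erase M) f}) → {f // IsST α L f} :=
  fun x => ⟨_, x.2.2.ext_fwd x.1.2 hM hmax⟩

lemma stMap_bij (α : YoungDiagram) (L : Finset ℕ) (M : ℕ) (hM : M ∈ L) (hmax : ∀ x ∈ L, x ≤ M) :
    Function.Bijective (stMap α L M hM hmax) := by
  constructor
  · rintro ⟨⟨β, hβ⟩, f, hf⟩ ⟨⟨β', hβ'⟩, f', hf'⟩ heq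
    simp only at hf hf'
    have h1 := congrArg Subtype.val heq
    simp only [stMap] at h1
    have key : ∀ (β : YoungDiagram) (f), β ∈ Dn α → IsST β (L.erase M) f → ∀ d, d ∈ β ↔ d ∈ α ∧
        (fun c => if c ∈ α ∧ c ∉ β then M else f c) d ≠ M := by
      intro β f hβ hf d
      constructor
      · intro hd
        refine ⟨(mem_Dn.1 hβ).1 hd, ?_⟩
        simp only [hd, not_true, and_false, if_false]
        exact Finset.ne_of_mem_erase ((hf.img (f d)).2 ⟨d, hd, rfl⟩)
      · rintro ⟨h1, h2⟩
        by_contra hd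
        simp [h1, hd] at h2
    have h2 : β = β' := by
      apply YoungDiagram.ext
      ext d
      rw [YoungDiagram.mem_cells, YoungDiagram.mem_cells, key β f hβ hf, key β' f' hβ' hf', h1]
    subst h2
    have h3 : f = f' := by
      funext d
      by_cases hd : d ∈ β
      · have := congrFun h1 d
        simpa [hd] using this
      · rw [hf.zero d hd, hf'.zero d hd]
    subst h3
    rfl
  · rintro ⟨f, hf⟩
    obtain ⟨β, hβ, f', hf', h⟩ := hf.ext_bwd hM hmax
    exact ⟨⟨⟨β, hβ⟩, f', hf'⟩, Subtype.ext h⟩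

lemma card_IsST (m : ℕ) : ∀ (α : YoungDiagram) (L : Finset ℕ), α.card = m → L.card = m →
    Finite {f // IsST α L f} ∧ Nat.card {f // IsST α L f} = gg m α := by
  induction m with
  | zero =>
    intro α L hα hL
    have hα' : ∀ c, c ∉ α := by
      intro c hc
      have : α.cells = ∅ := Finset.card_eq_zero.1 hα
      rw [← YoungDiagram.mem_cells, this] at hc
      simp at hc
    have hL' : L = ∅ := Finset.card_eq_zero.1 hL
    subst hL'
    have hu : Nonempty (Unique {f // IsST α ∅ f}) := by
      refine ⟨⟨⟨⟨fun _ => 0, ⟨?_, ?_, ?_, ?_, ?_⟩⟩⟩, ?_⟩⟩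
      · simp
      · intro c hc; exact absurd hc (hα' c)
      · intro _ _ _ _ hc; exact absurd hc (hα' _)
      · intro _ _ _ _ hc; exact absurd hc (hα' _)
      · simp [hα']
      · rintro ⟨f, hf⟩
        apply Subtype.ext
        funext d
        exact hf.zero d (hα' d)
    obtain ⟨hu⟩ := hu
    exact ⟨inferInstance, by rw [gg]; exact Nat.card_unique⟩
  | succ m ih =>
    intro α L hα hL
    have hne : L.Nonempty := Finset.card_pos.1 (by omega)
    have hM := L.max'_mem hne
    have hmax : ∀ x ∈ L, x ≤ L.max' hne := fun x hx => L.le_max' x hx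
    have hb := stMap_bij α L _ hM hmax
    have hi : ∀ β : {β // β ∈ Dn α}, Finite {f // IsST β.1 (L.erase (L.max' hne)) f} ∧
        Nat.card {f // IsST β.1 (L.erase (L.max' hne)) f} = gg m β.1 := by
      intro β
      apply ih
      · have := (mem_Dn.1 β.2).2
        omega
      · rw [Finset.card_erase_of_mem hM, hL]; rfl
    have hfin := fun β => (hi β).1
    refine ⟨Finite.of_surjective _ hb.2, ?_⟩
    rw [← Nat.card_congr (Equiv.ofBijective _ hb), Nat.card_sigma]
    simp only [(hi _).2]
    rw [gg]
    exact Finset.sum_coe_sort (Dn α) (fun β => gg m β)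

/-- assembling a pair -/
def tpMap (k : ℕ) (α : YoungDiagram) :
    (Σ q : PQ k α.card, {f // IsST α q.1.2 f}) → TabPerm k α := fun x =>
  { T :=
    { label := x.2.1
      mem_of_cell := fun c hc => x.1.2.1.sub ((x.2.2.img _).2 ⟨c, hc, rfl⟩)
      zero_of_not_cell := x.2.2.zero
      injOn := x.2.2.inj
      row_incr := x.2.2.row
      col_incr := x.2.2.col }
    π := x.1.1.1
    perm_of := x.1.2.1.out
    dec := x.1.2.1.dec
    fix_mem := fun y hy hf => (x.2.2.img y).1 (x.1.2.1.fix y hy hf)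
    label_max := fun c hc y hy => x.1.2.1.max _ ((x.2.2.img _).2 ⟨c, hc, rfl⟩) y hy }

lemma tpMap_bij (k : ℕ) (α : YoungDiagram) : Function.Bijective (tpMap k α) := by
  constructor
  · rintro ⟨⟨⟨π, L⟩, h, hc⟩, f, hf⟩ ⟨⟨⟨π', L'⟩, h', hc'⟩, f', hf'⟩ heq
    have h1 : π = π' := congrArg TabPerm.π heq
    have h2 : f = f' := congrArg (fun t => t.T.label) heq
    subst h1 h2
    have h3 : L = L' := by
      ext x
      exact (hf.img x).trans (hf'.img x).symm
    subst h3
    rfl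
  · rintro ⟨⟨f, h1, h2, h3, h4, h5⟩, π, a1, a2, a3, a4⟩
    simp only at a3 a4
    refine ⟨⟨⟨(π, α.cells.image f), ⟨a1, a2, ?_, ?_, ?_⟩, ?_⟩, f, ⟨h2, h3, h4, h5, ?_⟩⟩, rfl⟩
    · intro x hx
      simp only [Finset.mem_image, YoungDiagram.mem_cells] at hx
      obtain ⟨c, hc, rfl⟩ := hx
      exact h1 c hc
    · intro x hx hf
      simp only [Finset.mem_image, YoungDiagram.mem_cells]
      exact a3 x hx hf
    · intro x hx
      simp only [Finset.mem_image, YoungDiagram.mem_cells] at hx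
      obtain ⟨c, hc, rfl⟩ := hx
      exact a4 c hc
    · exact Finset.card_image_of_injOn (fun c hc c' hc' h => h3 c hc c' hc' h)
    · intro x
      simp

lemma card_TabPerm (k : ℕ) (α : YoungDiagram) :
    Nat.card (TabPerm k α) = AQ k α.card * g α := by
  have hfin := PQ_finite k α.card
  have := Fintype.ofFinite (PQ k α.card)
  have h1 := fun q : PQ k α.card => card_IsST α.card α q.1.2 rfl q.2.2
  have h2 := fun q => (h1 q).1
  rw [← Nat.card_congr (Equiv.ofBijective _ (tpMap_bij k α)), Nat.card_sigma]
  simp only [(h1 _).2]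
  simp [AQ, g]

/-! ### Truncation -/

lemma mem_truncate {μ : YoungDiagram} {i j : ℕ} : (i, j) ∈ truncate μ ↔ (i + 1, j) ∈ μ := by
  rw [← YoungDiagram.mem_cells]
  simp only [truncate, Finset.mem_image, Finset.mem_filter, YoungDiagram.mem_cells, Prod.mk.injEq]
  constructor
  · rintro ⟨⟨a, b⟩, ⟨h1, h2⟩, h3, h4⟩
    simp only at h2 h3 h4
    have : a = i + 1 := by omega
    subst this h4
    exact h1
  · intro h
    exact ⟨(i + 1, j), ⟨h, by simp⟩, by simp, rfl⟩

lemma rowLen_ext {μ : YoungDiagram} {i r : ℕ} (h : ∀ j, (i, j) ∈ μ ↔ j < r) : μ.rowLen i = r := by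
  have h1 := h r
  have h2 := h (μ.rowLen i)
  rw [YoungDiagram.mem_iff_lt_rowLen] at h1 h2
  omega

lemma rowLen_truncate (μ : YoungDiagram) (i : ℕ) : (truncate μ).rowLen i = μ.rowLen (i + 1) := by
  apply rowLen_ext
  intro j
  rw [mem_truncate, YoungDiagram.mem_iff_lt_rowLen]

lemma card_truncate (μ : YoungDiagram) : μ.card = μ.rowLen 0 + (truncate μ).card := by
  have h1 : (truncate μ).card = (μ.cells.filter fun c => 1 ≤ c.1).card := by
    unfold YoungDiagram.card truncate
    apply Finset.card_image_of_injOn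
    rintro ⟨a, b⟩ h ⟨a', b'⟩ h' heq
    simp only [Finset.coe_filter, Set.mem_ofPred_eq, Prod.mk.injEq] at h h' heq
    ext <;> simp <;> omega
  rw [h1, YoungDiagram.rowLen_eq_card, YoungDiagram.row, YoungDiagram.card,
    ← Finset.card_filter_add_card_filter_not (s := μ.cells) (fun c => c.1 = 0)]
  congr 2
  ext c
  simp only [Finset.mem_filter]
  have : (¬ c.1 = 0) ↔ 1 ≤ c.1 := by omega
  rw [this]

lemma truncate_inf (μ ν : YoungDiagram) : truncate (μ ⊓ ν) = truncate μ ⊓ truncate ν := by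
  apply YoungDiagram.ext
  ext ⟨i, j⟩
  simp [mem_truncate, YoungDiagram.mem_inf]

lemma rowLen_inf (μ ν : YoungDiagram) (i : ℕ) : (μ ⊓ ν).rowLen i = min (μ.rowLen i) (ν.rowLen i) := by
  apply rowLen_ext
  intro j
  rw [YoungDiagram.mem_inf, YoungDiagram.mem_iff_lt_rowLen, YoungDiagram.mem_iff_lt_rowLen,
    lt_min_iff]

lemma truncate_inj {μ ν : YoungDiagram} (hc : μ.card = ν.card) (h : truncate μ = truncate ν) :
    μ = ν := by
  have h1 := card_truncate μ
  have h2 := card_truncate ν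
  rw [h] at h1
  have h3 : μ.rowLen 0 = ν.rowLen 0 := by omega
  apply YoungDiagram.ext
  ext ⟨i, j⟩
  rw [YoungDiagram.mem_cells, YoungDiagram.mem_cells]
  cases i with
  | zero => rw [YoungDiagram.mem_iff_lt_rowLen, YoungDiagram.mem_iff_lt_rowLen, h3]
  | succ i => rw [← mem_truncate, ← mem_truncate, h]

lemma exists_lift (γ : YoungDiagram) (r : ℕ) (h : γ.rowLen 0 ≤ r) :
    ∃ μ : YoungDiagram, truncate μ = γ ∧ μ.card = r + γ.card := by
  let μ : YoungDiagram :=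
    { cells := ((Finset.range r).image fun j => (0, j)) ∪ γ.cells.image fun c => (c.1 + 1, c.2)
      isLowerSet := by
        rintro ⟨a, b⟩ ⟨a', b'⟩ ⟨h1, h2⟩ h3
        simp only [Finset.coe_union, Finset.coe_image, Set.mem_union, Set.mem_image,
          Finset.mem_coe, Finset.mem_range, YoungDiagram.mem_cells, Prod.mk.injEq,
          Prod.exists] at h1 h2 h3 ⊢
        rcases h3 with ⟨j, hj, rfl, rfl⟩ | ⟨x, y, hxy, rfl, rfl⟩
        · left
          exact ⟨b', by omega, by omega, rfl⟩
        · rcases a' with _ | a'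
          · left
            have h4 : (0, b') ∈ γ := γ.up_left_mem (by omega) h2 hxy
            rw [YoungDiagram.mem_iff_lt_rowLen] at h4
            exact ⟨b', by omega, rfl, rfl⟩
          · right
            exact ⟨a', b', γ.up_left_mem (by omega) h2 hxy, rfl, rfl⟩ }
  have hm : ∀ i j, (i, j) ∈ μ ↔ (i = 0 ∧ j < r) ∨ (∃ i', i = i' + 1 ∧ (i', j) ∈ γ) := by
    intro i j
    change (i, j) ∈ ((Finset.range r).image fun j => ((0 : ℕ), j)) ∪ γ.cells.image (fun c => (c.1 + 1, c.2)) ↔ _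
    simp only [Finset.mem_union, Finset.mem_image, Finset.mem_range, Prod.mk.injEq,
      YoungDiagram.mem_cells, Prod.exists]
    constructor
    · rintro (⟨a, h1, h2, h3⟩ | ⟨a, b, h1, h2, h3⟩)
      · left; omega
      · right; subst h3; exact ⟨a, h2.symm, h1⟩
    · rintro (⟨h1, h2⟩ | ⟨a, h1, h2⟩)
      · left; exact ⟨j, h2, h1.symm, rfl⟩
      · right; exact ⟨a, j, h2, h1.symm, rfl⟩
  have ht : truncate μ = γ := by
    apply YoungDiagram.ext
    ext ⟨i, j⟩
    rw [YoungDiagram.mem_cells, YoungDiagram.mem_cells, mem_truncate, hm]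
    simp
  refine ⟨μ, ht, ?_⟩
  rw [card_truncate, ht, rowLen_ext (r := r)]
  intro j
  rw [hm]
  simp

lemma card_inf_truncate (μ ν : YoungDiagram) :
    (μ ⊓ ν).card = min (μ.rowLen 0) (ν.rowLen 0) + (truncate μ ⊓ truncate ν).card := by
  rw [card_truncate, truncate_inf, rowLen_inf]

/-! ### Steps -/

lemma moveCorner_iff {ν lam : YoungDiagram} : MoveCorner ν lam ↔
    ν ≠ lam ∧ ν.card = lam.card ∧ (ν ⊓ lam).card + 1 = lam.card := by
  constructor
  · rintro ⟨hne, c, c', hc, hc', h1, h2⟩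
    have hcm : c ∈ ν.cells := hc.1
    have hcc : c' ≠ c := by
      rintro rfl
      apply hne
      apply YoungDiagram.ext
      rw [h2, Finset.insert_erase hcm]
    have hc'ν : c' ∉ ν.cells := fun h => h1 (Finset.mem_erase.2 ⟨hcc, h⟩)
    have h3 := Finset.card_erase_add_one hcm
    have h4 : lam.cells.card = (ν.cells.erase c).card + 1 := by
      rw [h2, Finset.card_insert_of_notMem h1]
    have h5 : (ν ⊓ lam).cells = ν.cells.erase c := by
      rw [YoungDiagram.cells_inf, h2]
      ext d
      simp only [Finset.mem_inter, Finset.mem_insert, Finset.mem_erase]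
      constructor
      · rintro ⟨a, rfl | b⟩
        · exact absurd a hc'ν
        · exact b
      · tauto
    refine ⟨hne.symm, ?_, ?_⟩
    · simp only [YoungDiagram.card]; omega
    · simp only [YoungDiagram.card, h5]; omega
  · rintro ⟨hne, h1, h2⟩
    have hD1 : ν ⊓ lam ∈ Dn ν := mem_Dn.2 ⟨inf_le_left, by omega⟩
    have hD2 : ν ⊓ lam ∈ Dn lam := mem_Dn.2 ⟨inf_le_right, by omega⟩
    have key : ∀ {μ κ : YoungDiagram}, κ ∈ Dn μ → ∃ c, c ∉ κ ∧ IsCorner μ c ∧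
        (∀ d, d ∈ μ ↔ d = c ∨ d ∈ κ) := by
      intro μ κ h
      obtain ⟨⟨i, j⟩, a1, a2, a3⟩ := exists_cell_of_Dn h
      refine ⟨(i, j), a1, ⟨a2, ?_, ?_⟩, a3⟩
      · intro h
        rw [a3] at h
        simp at h
        exact a1 (κ.up_left_mem (by omega) le_rfl h)
      · intro h
        rw [a3] at h
        simp at h
        exact a1 (κ.up_left_mem le_rfl (by omega) h)
    obtain ⟨c, a1, a2, a3⟩ := key hD1
    obtain ⟨c', b1, b2, b3⟩ := key hD2
    have he : ν.cells.erase c = (ν ⊓ lam).cells := by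
      ext d
      simp only [Finset.mem_erase, YoungDiagram.mem_cells, a3]
      constructor
      · tauto
      · intro h; exact ⟨by rintro rfl; exact a1 h, Or.inr h⟩
    refine ⟨hne.symm, c, c', a2, b2, ?_, ?_⟩
    · rw [he]; exact b1
    · rw [he]
      ext d
      rw [Finset.mem_insert, YoungDiagram.mem_cells, YoungDiagram.mem_cells]
      exact b3 d

/-- The data of one step. -/
def Steps (ν lam : YoungDiagram) : Type :=
  {d : Option (ℕ × ℕ) // (MoveCorner ν lam ∧ d = none) ∨
    (lam = ν ∧ ∃ c, d = some c ∧ IsCorner lam c ∧ ¬ IsFirstCorner lam c)}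

lemma Steps_finite (ν lam : YoungDiagram) : Finite (Steps ν lam) := by
  refine Set.Finite.to_subtype (s := fun d : Option (ℕ × ℕ) => (MoveCorner ν lam ∧ d = none) ∨
    (lam = ν ∧ ∃ c, d = some c ∧ IsCorner lam c ∧ ¬ IsFirstCorner lam c)) ?_
  refine Set.Finite.subset (Finset.finite_toSet (Finset.insertNone lam.cells)) ?_
  rintro d (⟨_, rfl⟩ | ⟨_, c, rfl, h, _⟩)
  · simp
  · simpa using h.1

open Classical in
lemma card_Steps_ne {ν lam : YoungDiagram} (hne : ν ≠ lam) (hc : ν.card = lam.card) :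
    Nat.card (Steps ν lam) = if (ν ⊓ lam).card + 1 = lam.card then 1 else 0 := by
  split_ifs with h
  · have hm : MoveCorner ν lam := moveCorner_iff.2 ⟨hne, hc, h⟩
    have : Unique (Steps ν lam) :=
      ⟨⟨⟨none, Or.inl ⟨hm, rfl⟩⟩⟩, by
        rintro ⟨d, ⟨_, rfl⟩ | ⟨h', _⟩⟩
        · rfl
        · exact absurd h'.symm hne⟩
    exact Nat.card_unique
  · have : IsEmpty (Steps ν lam) := by
      refine ⟨?_⟩
      rintro ⟨d, ⟨h', _⟩ | ⟨h', _⟩⟩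
      · exact h (moveCorner_iff.1 h').2.2
      · exact absurd h'.symm hne
    exact Nat.card_of_isEmpty

lemma card_Steps_self {lam : YoungDiagram} (h : lam.rowLen 1 < lam.rowLen 0) :
    Nat.card (Steps lam lam) = (Dn (truncate lam)).card := by
  rw [card_Dn]
  have hR : ∀ i : {i // i ∈ Rrows (truncate lam)}, lam.rowLen (i.1 + 2) < lam.rowLen (i.1 + 1) := by
    intro i
    have := mem_Rrows.1 i.2
    rwa [rowLen_truncate, rowLen_truncate] at this
  have hcor : ∀ i : {i // i ∈ Rrows (truncate lam)},
      IsCorner lam (i.1 + 1, lam.rowLen (i.1 + 1) - 1) ∧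
      ¬ IsFirstCorner lam (i.1 + 1, lam.rowLen (i.1 + 1) - 1) := by
    intro i
    have h1 := hR i
    refine ⟨⟨?_, ?_, ?_⟩, ?_⟩
    · rw [YoungDiagram.mem_iff_lt_rowLen]; omega
    · rw [YoungDiagram.mem_iff_lt_rowLen]
      change ¬ (lam.rowLen (i.1 + 1) - 1 < lam.rowLen (i.1 + 2))
      omega
    · rw [YoungDiagram.mem_iff_lt_rowLen]
      change ¬ (lam.rowLen (i.1 + 1) - 1 + 1 < lam.rowLen (i.1 + 1))
      omega
    · rintro ⟨_, h2⟩
      simp only at h2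
      have := lam.rowLen_anti 1 (i.1 + 1) (by omega)
      omega
  let F : {i // i ∈ Rrows (truncate lam)} → Steps lam lam := fun i =>
    ⟨some (i.1 + 1, lam.rowLen (i.1 + 1) - 1), Or.inr ⟨rfl, _, rfl, hcor i⟩⟩
  have hF : Function.Bijective F := by
    constructor
    · intro i i' heq
      have h1 := congrArg Subtype.val heq
      simp only [F, Option.some.injEq, Prod.mk.injEq] at h1
      apply Subtype.ext
      omega
    · rintro ⟨d, ⟨h', _⟩ | ⟨_, ⟨i, j⟩, rfl, hc, hnf⟩⟩
      · exact absurd rfl (moveCorner_iff.1 h').1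
      · have hi : i ≠ 0 := by
          rintro rfl
          exact hnf ⟨hc, rfl⟩
        obtain ⟨i, rfl⟩ := Nat.exists_eq_succ_of_ne_zero hi
        obtain ⟨c1, c2, c3⟩ := hc
        simp only [YoungDiagram.mem_iff_lt_rowLen, Nat.succ_eq_add_one] at c1 c2 c3
        refine ⟨⟨i, ?_⟩, ?_⟩
        · rw [mem_Rrows, rowLen_truncate, rowLen_truncate]
          omega
        · apply Subtype.ext
          simp only [F, Option.some.injEq, Prod.mk.injEq, Nat.succ_eq_add_one, true_and]
          omega
  rw [← Nat.card_congr (Equiv.ofBijective F hF)]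
  simp

/-! ### Weights -/

open Classical in
/-- number of ways to go from `γ` to `α` in a single truncated step -/
noncomputable def wt (γ α : YoungDiagram) : ℕ :=
  (if γ ∈ Dn α then 1 else 0) + (if γ ∈ Up α then 1 else 0) +
    ((Dn α).filter fun β => β ∈ Dn γ).card

open Classical in
lemma card_common {γ α : YoungDiagram} (hne : γ ≠ α) :
    ((Dn α).filter fun β => β ∈ Dn γ).card =
      if γ.card = α.card ∧ (γ ⊓ α).card + 1 = α.card then 1 else 0 := by
  have hall : ∀ β, β ∈ Dn α → β ∈ Dn γ → γ.card = α.card ∧ β = γ ⊓ α := by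
    intro β h1 h2
    rw [mem_Dn] at h1 h2
    have h3 : γ.card = α.card := by omega
    refine ⟨h3, ?_⟩
    have h4 : β ≤ γ ⊓ α := le_inf h2.1 h1.1
    have h5 := card_le_of_le (inf_le_right : γ ⊓ α ≤ α)
    apply eq_of_le_of_card h4
    by_contra hc
    have h6 := eq_of_le_of_card (inf_le_right : γ ⊓ α ≤ α) (by omega)
    have h7 : α ≤ γ := by rw [← h6]; exact inf_le_left
    exact hne (eq_of_le_of_card h7 h3.le).symm
  split_ifs with h
  · rw [Finset.card_eq_one]
    refine ⟨γ ⊓ α, ?_⟩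
    ext β
    rw [Finset.mem_filter, Finset.mem_singleton]
    constructor
    · rintro ⟨h1, h2⟩
      exact (hall β h1 h2).2
    · rintro rfl
      exact ⟨mem_Dn.2 ⟨inf_le_right, h.2⟩, mem_Dn.2 ⟨inf_le_left, by omega⟩⟩
  · rw [Finset.card_eq_zero, Finset.filter_eq_empty_iff]
    intro β h1 h2
    obtain ⟨h3, rfl⟩ := hall β h1 h2
    exact h ⟨h3, (mem_Dn.1 h1).2⟩

lemma wt_self (α : YoungDiagram) : wt α α = (Dn α).card := by
  classical
  have h1 : α ∉ Dn α := by rw [mem_Dn]; omega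
  have h2 : α ∉ Up α := by rw [mem_Up]; omega
  rw [wt, if_neg h1, if_neg h2, Finset.filter_true_of_mem (fun _ h => h)]
  omega

lemma card_Steps_eq {ν lam : YoungDiagram} (hc : ν.card = lam.card)
    (h : ν ≠ lam ∨ lam.rowLen 1 < lam.rowLen 0) :
    Nat.card (Steps ν lam) = wt (truncate ν) (truncate lam) := by
  classical
  by_cases hne : ν = lam
  · subst hne
    rw [card_Steps_self (by tauto), wt_self]
  · rw [card_Steps_ne hne hc, wt,
      card_common (fun h => hne (truncate_inj hc h)), card_inf_truncate]
    have h1 := card_truncate ν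
    have h2 := card_truncate lam
    set γ := truncate ν
    set α := truncate lam
    have h3 := card_le_of_le (inf_le_left : γ ⊓ α ≤ γ)
    have h4 := card_le_of_le (inf_le_right : γ ⊓ α ≤ α)
    have e1 : γ ∈ Dn α ↔ γ.card + 1 = α.card ∧ (γ ⊓ α).card = γ.card := by
      rw [mem_Dn]
      constructor
      · rintro ⟨a, b⟩
        exact ⟨b, by rw [inf_eq_left.2 a]⟩
      · rintro ⟨a, b⟩
        refine ⟨?_, a⟩
        have := eq_of_le_of_card (inf_le_left : γ ⊓ α ≤ γ) b.ge
        exact inf_eq_left.1 this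
    have e2 : γ ∈ Up α ↔ γ.card = α.card + 1 ∧ (γ ⊓ α).card = α.card := by
      rw [mem_Up]
      constructor
      · rintro ⟨a, b⟩
        exact ⟨b, by rw [inf_eq_right.2 a]⟩
      · rintro ⟨a, b⟩
        refine ⟨?_, a⟩
        have := eq_of_le_of_card (inf_le_right : γ ⊓ α ≤ α) b.ge
        exact inf_eq_right.1 this
    simp only [e1, e2]
    generalize (γ ⊓ α).card = x at *
    split_ifs <;> omega

lemma rowLen_le_of_Dn {β γ : YoungDiagram} (h : β ∈ Dn γ) (i : ℕ) :
    γ.rowLen i ≤ β.rowLen i + 1 := by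
  obtain ⟨c, h1, h2, h3⟩ := exists_cell_of_Dn h
  by_contra hc
  have a1 : (i, β.rowLen i) ∈ γ := YoungDiagram.mem_iff_lt_rowLen.2 (by omega)
  have a2 : (i, β.rowLen i + 1) ∈ γ := YoungDiagram.mem_iff_lt_rowLen.2 (by omega)
  rw [h3, YoungDiagram.mem_iff_lt_rowLen] at a1 a2
  have b1 : (i, β.rowLen i) = c := by rcases a1 with a | a; exact a; omega
  have b2 : (i, β.rowLen i + 1) = c := by rcases a2 with a | a; exact a; omega
  rw [← b2] at b1
  simp at b1

lemma rowLen_mono {β γ : YoungDiagram} (h : β ≤ γ) (i : ℕ) : β.rowLen i ≤ γ.rowLen i := by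
  by_contra hc
  have a1 : (i, γ.rowLen i) ∈ β := YoungDiagram.mem_iff_lt_rowLen.2 (by omega)
  have := YoungDiagram.mem_iff_lt_rowLen.1 (h a1)
  omega

lemma wt_ne_zero {γ α : YoungDiagram} (h : wt γ α ≠ 0) : γ.rowLen 0 ≤ α.rowLen 0 + 1 := by
  classical
  by_cases h1 : γ ∈ Dn α
  · have := rowLen_mono (mem_Dn.1 h1).1 0
    omega
  by_cases h2 : γ ∈ Up α
  · exact rowLen_le_of_Dn (mem_Up_iff_mem_Dn.1 h2) 0
  rw [wt, if_neg h1, if_neg h2] at h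
  have h3 : ((Dn α).filter fun β => β ∈ Dn γ).Nonempty := by
    rw [← Finset.card_pos]; omega
  obtain ⟨β, hβ⟩ := h3
  rw [Finset.mem_filter] at hβ
  have := rowLen_le_of_Dn hβ.2 0
  have := rowLen_mono (mem_Dn.1 hβ.1).1 0
  omega

lemma sum_wt (α : YoungDiagram) (N : ℕ) (hN : α.card + 1 ≤ N) (V : YoungDiagram → ℕ) :
    ∑ γ ∈ Yle N, V γ * wt γ α =
      ∑ γ ∈ Dn α, V γ + ∑ γ ∈ Up α, V γ + ∑ β ∈ Dn α, ∑ γ ∈ Up β, V γ := by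
  classical
  have key : ∀ S : Finset YoungDiagram, S ⊆ Yle N →
      ∑ γ ∈ Yle N, V γ * (if γ ∈ S then 1 else 0) = ∑ γ ∈ S, V γ := by
    intro S hS
    simp only [mul_ite, mul_one, mul_zero]
    rw [← Finset.sum_filter, Finset.filter_mem_eq_inter, Finset.inter_eq_right.2 hS]
  simp only [wt, mul_add, Finset.sum_add_distrib]
  rw [key, key]
  · congr 1
    have h1 : ∀ γ, ((Dn α).filter fun β => β ∈ Dn γ).card =
        ∑ β ∈ Dn α, if γ ∈ Up β then 1 else 0 := by
      intro γ
      rw [Finset.card_filter]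
      simp only [mem_Up_iff_mem_Dn]
    simp only [h1, Finset.mul_sum]
    rw [Finset.sum_comm]
    refine Finset.sum_congr rfl fun β hβ => ?_
    apply key
    intro γ hγ
    rw [mem_Yle]
    have := (mem_Up.1 hγ).2
    have := (mem_Dn.1 hβ).2
    omega
  · intro γ hγ
    rw [mem_Yle]
    have := (mem_Up.1 hγ).2
    omega
  · intro γ hγ
    rw [mem_Yle]
    have := (mem_Dn.1 hγ).2
    omega

lemma weight_rec (k : ℕ) (α : YoungDiagram) (N : ℕ) (hN : α.card + 1 ≤ N) :
    ∑ γ ∈ Yle N, (AQ k γ.card * g γ) * wt γ α = AQ (k + 1) α.card * g α := by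
  rw [sum_wt α N hN]
  have hup : ∀ β : YoungDiagram, ∑ γ ∈ Up β, AQ k γ.card * g γ =
      AQ k (β.card + 1) * ((β.card + 1) * g β) := by
    intro β
    rw [← g_sum_Up β.card β rfl, Finset.mul_sum]
    refine Finset.sum_congr rfl fun γ hγ => ?_
    rw [(mem_Up.1 hγ).2]
  simp only [hup]
  rcases Nat.eq_zero_or_pos α.card with h0 | hpos
  · rw [Dn_of_card_zero h0, h0, AQ_succ_zero]
    simp
  · obtain ⟨m, hm⟩ := Nat.exists_eq_succ_of_ne_zero hpos.ne'
    rw [Nat.succ_eq_add_one] at hm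
    have h1 : ∑ γ ∈ Dn α, AQ k γ.card * g γ = AQ k m * g α := by
      rw [← g_sum_Dn hpos.ne', Finset.mul_sum]
      refine Finset.sum_congr rfl fun γ hγ => ?_
      have := (mem_Dn.1 hγ).2
      rw [show γ.card = m by omega]
    have h2 : ∑ β ∈ Dn α, AQ k (β.card + 1) * ((β.card + 1) * g β) =
        AQ k (m + 1) * ((m + 1) * g α) := by
      rw [← g_sum_Dn hpos.ne', Finset.mul_sum, Finset.mul_sum]
      refine Finset.sum_congr rfl fun γ hγ => ?_
      have := (mem_Dn.1 hγ).2
      rw [show γ.card = m by omega]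
    rw [h1, h2, hm, AQ_succ_succ]
    ring

/-! ### Recursion for Kronecker tableaux -/

/-- append a step -/
def ktMap (k : ℕ) (μ lam : YoungDiagram) :
    (Σ ν : YoungDiagram, KroneckerTableau k μ ν × Steps ν lam) → KroneckerTableau (k + 1) μ lam :=
  fun x =>
  { seq := Fin.snoc (α := fun _ => YoungDiagram) x.2.1.seq lam
    dist := Fin.snoc (α := fun _ => Option (ℕ × ℕ)) x.2.1.dist x.2.2.1
    init := by
      have h : (0 : Fin (k + 2)) = Fin.castSucc 0 := rfl
      rw [h, Fin.snoc_castSucc]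
      exact x.2.1.init
    final := Fin.snoc_last _ _
    step := by
      intro i
      refine Fin.lastCases ?_ ?_ i
      · rw [Fin.succ_last, Fin.snoc_last, Fin.snoc_castSucc, Fin.snoc_last, x.2.1.final]
        exact x.2.2.2
      · intro i
        rw [Fin.succ_castSucc, Fin.snoc_castSucc, Fin.snoc_castSucc, Fin.snoc_castSucc]
        exact x.2.1.step i }

lemma kt_ext {k : ℕ} {μ lam : YoungDiagram} {s t : KroneckerTableau k μ lam}
    (h1 : s.seq = t.seq) (h2 : s.dist = t.dist) : s = t := by
  cases s; cases t
  simp only at h1 h2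
  subst h1 h2
  rfl

lemma ktMap_bij (k : ℕ) (μ lam : YoungDiagram) : Function.Bijective (ktMap k μ lam) := by
  constructor
  · rintro ⟨ν, t, d⟩ ⟨ν', t', d'⟩ heq
    have h1 := congrArg KroneckerTableau.seq heq
    have h2 := congrArg KroneckerTableau.dist heq
    simp only [ktMap] at h1 h2
    have a1 : t.seq = t'.seq := by
      funext i
      have := congrFun h1 i.castSucc
      rwa [Fin.snoc_castSucc, Fin.snoc_castSucc] at this
    have a2 : t.dist = t'.dist := by
      funext i
      have := congrFun h2 i.castSucc
      rwa [Fin.snoc_castSucc, Fin.snoc_castSucc] at this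
    have a3 : d.1 = d'.1 := by
      have := congrFun h2 (Fin.last k)
      rwa [Fin.snoc_last, Fin.snoc_last] at this
    have a4 : ν = ν' := by
      rw [← t.final, ← t'.final, a1]
    subst a4
    have a5 : t = t' := kt_ext a1 a2
    have a6 : d = d' := Subtype.ext a3
    subst a5 a6
    rfl
  · intro t
    have hst := t.step (Fin.last k)
    rw [Fin.succ_last, t.final] at hst
    refine ⟨⟨t.seq (Fin.castSucc (Fin.last k)), ⟨fun i => t.seq i.castSucc, fun i => t.dist i.castSucc,
      t.init, rfl, ?_⟩, ⟨t.dist (Fin.last k), hst⟩⟩, ?_⟩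
    · intro i
      have := t.step i.castSucc
      rwa [Fin.succ_castSucc] at this
    · apply kt_ext
      · funext i
        refine Fin.lastCases ?_ ?_ i
        · simp only [ktMap]
          rw [Fin.snoc_last, t.final]
        · intro i
          simp only [ktMap]
          rw [Fin.snoc_castSucc]
      · funext i
        refine Fin.lastCases ?_ ?_ i
        · simp only [ktMap]
          rw [Fin.snoc_last]
        · intro i
          simp only [ktMap]
          rw [Fin.snoc_castSucc]

lemma kt_card {k : ℕ} {μ lam : YoungDiagram} (t : KroneckerTableau k μ lam) :
    lam.card = μ.card := by
  have h : ∀ i, (t.seq i).card = μ.card := by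
    intro i
    induction i using Fin.induction with
    | zero => rw [t.init]
    | succ i ih =>
      rcases t.step i with ⟨h, _⟩ | ⟨h, _⟩
      · rw [← (moveCorner_iff.1 h).2.1, ih]
      · rw [h, ih]
  rw [← h (Fin.last k), t.final]

open Classical in
/-- diagrams with `n` cells -/
noncomputable def Yn (n : ℕ) : Finset YoungDiagram := (Yle n).filter fun ν => ν.card = n

lemma mem_Yn {n : ℕ} {ν : YoungDiagram} : ν ∈ Yn n ↔ ν.card = n := by
  simp only [Yn, Finset.mem_filter, mem_Yle]
  constructor
  · exact fun h => h.2
  · exact fun h => ⟨h.le, h⟩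

/-- restrict to a finite index set. -/
def ktMap' (k : ℕ) (μ lam : YoungDiagram) :
    (Σ ν : {ν // ν ∈ Yn μ.card}, KroneckerTableau k μ ν.1 × Steps ν.1 lam) →
      KroneckerTableau (k + 1) μ lam :=
  fun x => ktMap k μ lam ⟨x.1.1, x.2⟩

lemma ktMap'_bij (k : ℕ) (μ lam : YoungDiagram) : Function.Bijective (ktMap' k μ lam) := by
  constructor
  · rintro ⟨⟨ν, hν⟩, x⟩ ⟨⟨ν', hν'⟩, x'⟩ heq
    have := (ktMap_bij k μ lam).1 heq
    simp only [Sigma.mk.injEq] at this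
    obtain ⟨rfl, h⟩ := this
    rw [eq_of_heq h]
  · intro t
    obtain ⟨⟨ν, x⟩, h⟩ := (ktMap_bij k μ lam).2 t
    exact ⟨⟨⟨ν, mem_Yn.2 (kt_card x.1)⟩, x⟩, h⟩

lemma kt_zero_sub (μ lam : YoungDiagram) : Subsingleton (KroneckerTableau 0 μ lam) := by
  refine ⟨fun s t => kt_ext ?_ ?_⟩
  · funext i
    rw [Fin.fin_one_eq_zero i, s.init, t.init]
  · funext i
    exact i.elim0

lemma kt_finite (μ : YoungDiagram) (k : ℕ) : ∀ lam, Finite (KroneckerTableau k μ lam) := by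
  induction k with
  | zero =>
    intro lam
    have := kt_zero_sub μ lam
    infer_instance
  | succ k ih =>
    intro lam
    have := Steps_finite
    exact Finite.of_surjective _ (ktMap'_bij k μ lam).2

lemma kt_rec (k : ℕ) (μ lam : YoungDiagram) : Nat.card (KroneckerTableau (k + 1) μ lam) =
    ∑ ν ∈ Yn μ.card, Nat.card (KroneckerTableau k μ ν) * Nat.card (Steps ν lam) := by
  have := Steps_finite
  have := kt_finite μ k
  rw [← Nat.card_congr (Equiv.ofBijective _ (ktMap'_bij k μ lam)), Nat.card_sigma]
  simp only [Nat.card_prod]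
  exact Finset.sum_coe_sort (Yn μ.card)
    (fun ν => Nat.card (KroneckerTableau k μ ν) * Nat.card (Steps ν lam))

lemma mem_rowDiagram {n i j : ℕ} : (i, j) ∈ rowDiagram n ↔ i = 0 ∧ j < n := by
  rw [rowDiagram, YoungDiagram.mem_ofRowLens]
  simp only [List.length_singleton, Nat.lt_one_iff]
  constructor
  · rintro ⟨h1, h2⟩
    subst h1
    exact ⟨rfl, by simpa using h2⟩
  · rintro ⟨rfl, h⟩
    exact ⟨rfl, by simpa using h⟩

lemma truncate_rowDiagram (n : ℕ) : (truncate (rowDiagram n)).card = 0 := by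
  have : truncate (rowDiagram n) = ⊥ := by
    apply YoungDiagram.ext
    ext ⟨i, j⟩
    rw [YoungDiagram.mem_cells, mem_truncate, mem_rowDiagram]
    simp
  rw [this]; rfl

lemma card_rowDiagram (n : ℕ) : (rowDiagram n).card = n := by
  rw [card_truncate, truncate_rowDiagram, add_zero]
  apply rowLen_ext
  intro j
  rw [mem_rowDiagram]
  simp

lemma eq_bot_of_card {α : YoungDiagram} (h : α.card = 0) : α = ⊥ :=
  (eq_of_le_of_card bot_le (by rw [h]; exact Nat.zero_le _)).symm

lemma kt_main (n k : ℕ) : ∀ lam : YoungDiagram, lam.card = n → k + lam.rowLen 1 ≤ n →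
    Nat.card (KroneckerTableau k (rowDiagram n) lam) =
      AQ k (truncate lam).card * g (truncate lam) := by
  induction k with
  | zero =>
    intro lam hc _
    by_cases h : (truncate lam).card = 0
    · have hl : lam = rowDiagram n := by
        apply truncate_inj
        · rw [hc, card_rowDiagram]
        · rw [eq_bot_of_card h, eq_bot_of_card (truncate_rowDiagram n)]
      have h1 := kt_zero_sub (rowDiagram n) lam
      have h2 : Nonempty (KroneckerTableau 0 (rowDiagram n) lam) :=
        ⟨⟨fun _ => rowDiagram n, fun i => i.elim0, rfl, hl.symm, fun i => i.elim0⟩⟩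
      rw [h, AQ_zero_zero, g, h, gg]
      exact Nat.card_eq_one_iff_unique.2 ⟨h1, h2⟩
    · rw [AQ_eq_zero (by omega), zero_mul]
      have : IsEmpty (KroneckerTableau 0 (rowDiagram n) lam) := by
        refine ⟨fun t => h ?_⟩
        have h1 := t.init
        have h2 := t.final
        have h3 : lam = rowDiagram n := h2.symm.trans h1
        rw [h3, truncate_rowDiagram]
      exact Nat.card_of_isEmpty
  | succ k ih =>
    intro lam hc hk
    classical
    have hlam := card_truncate lam
    have hN : (truncate lam).card + 1 ≤ n + 1 := by omega
    rw [kt_rec, card_rowDiagram, ← weight_rec k (truncate lam) (n + 1) hN]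
    have hterm : ∀ ν ∈ Yn n,
        Nat.card (KroneckerTableau k (rowDiagram n) ν) * Nat.card (Steps ν lam) =
        (AQ k (truncate ν).card * g (truncate ν)) * wt (truncate ν) (truncate lam) := by
      intro ν hν
      rw [mem_Yn] at hν
      by_cases hne : ν = lam
      · subst hne
        rw [ih ν hc (by omega)]
        by_cases hr : ν.rowLen 1 < ν.rowLen 0
        · rw [card_Steps_eq rfl (Or.inr hr)]
        · rw [AQ_eq_zero (by omega)]
          simp
      · rw [← card_Steps_eq (by omega) (Or.inl hne)]
        by_cases hS : (ν ⊓ lam).card + 1 = lam.card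
        · rw [ih ν hν]
          have hD : ν ⊓ lam ∈ Dn ν := mem_Dn.2 ⟨inf_le_left, by omega⟩
          have h1 := rowLen_le_of_Dn hD 1
          have h2 := rowLen_mono (inf_le_right : ν ⊓ lam ≤ lam) 1
          omega
        · rw [card_Steps_ne hne (by omega), if_neg hS]
          simp
    rw [Finset.sum_congr rfl hterm]
    have hinj : Set.InjOn truncate (Yn n : Set YoungDiagram) := by
      intro μ hμ ν hν h
      rw [Finset.mem_coe, mem_Yn] at hμ hν
      exact truncate_inj (by omega) h
    rw [← Finset.sum_image (f := fun γ => (AQ k γ.card * g γ) * wt γ (truncate lam)) hinj]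
    apply Finset.sum_subset
    · intro γ hγ
      rw [Finset.mem_image] at hγ
      obtain ⟨ν, hν, rfl⟩ := hγ
      rw [mem_Yn] at hν
      rw [mem_Yle]
      have := card_truncate ν
      omega
    · intro γ _ hγ
      by_contra hne
      have hw : wt γ (truncate lam) ≠ 0 := fun h => hne (by rw [h, mul_zero])
      have hk' : γ.card ≤ k := by
        by_contra hc'
        exact hne (by rw [AQ_eq_zero (by omega), zero_mul, zero_mul])
      have h1 := wt_ne_zero hw
      rw [rowLen_truncate, Nat.zero_add] at h1
      obtain ⟨μ, hμ1, hμ2⟩ := exists_lift γ (n - γ.card) (by omega)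
      apply hγ
      rw [Finset.mem_image]
      exact ⟨μ, mem_Yn.2 (by omega), hμ1⟩

/-- Lemma 3.2: for `n ≥ k + λ₂`, the number of Kronecker tableaux of length `k`, initial
shape `(n)` and final shape `λ` equals the number of pairs `(T, π)` where `T` is a partial
standard tableau of shape `λ̄` with labels in `{1, …, k}` and `π` is a permutation of
`{1, …, k}` all of whose non-trivial cycles are decreasing, every fixed point of `π` is a
label of `T`, and every label of `T` is the greatest element of its cycle in `π`. -/
theorem statement2 (n k : ℕ) (hn : 1 ≤ n) (hk : 1 ≤ k) (lam : YoungDiagram)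
    (hcard : lam.card = n) (hstable : k + lam.rowLen 1 ≤ n) :
    Nat.card (KroneckerTableau k (rowDiagram n) lam) = Nat.card (TabPerm k (truncate lam)) := by
  rw [kt_main n k lam hcard hstable, card_TabPerm]

end KroneckerPaper
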